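/- Let β be a real Schur root of Q. Then there are finitely many quiver exceptional sets 𝓔_1,…,𝓔_m, each of cardinality at most |Q_0|−1, such that D(β) = ⋃_{1≤i≤m} Cone(𝓔_i). -/

import Mathlib

set_option autoImplicit false

noncomputable section

open scoped BigOperators

/-! Basic setup for representations of a quiver with vertex set `V`, arrow set `A`,
tail map `t` and head map `h`, over a field `K`. -/

variable (K : Type) [Field K]
variable {V A : Type} [Fintype V] [DecidableEq V] [Fintype A]

/-- The Euler form of the quiver `(V, A, t, h)`. -/
def eulerForm {R : Type} [CommRing R] (t h : A → V) (x y : V → R) : R :=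
  ∑ i, x i * y i - ∑ a, x (t a) * y (h a)

def natZ (x : V → ℕ) : V → ℤ := fun i => (x i : ℤ)
def intQ (x : V → ℤ) : V → ℚ := fun i => (x i : ℚ)
def natQ (x : V → ℕ) : V → ℚ := fun i => (x i : ℚ)

/-- The weight `⟨α,·⟩`. -/
def weightL (t h : A → V) (α : V → ℤ) : V → ℤ :=
  fun i => eulerForm t h α (fun j => if j = i then 1 else 0)

/-- The weight `−⟨·,α⟩`. -/
def weightR (t h : A → V) (α : V → ℤ) : V → ℤ :=
  fun i => - eulerForm t h (fun j => if j = i then 1 else 0) α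

/-- `IsPathFrom t h i p j` : the list of arrows `p` is a path from `i` to `j`. -/
def IsPathFrom (t h : A → V) : V → List A → V → Prop
  | i, [], j => i = j
  | i, a :: p, j => t a = i ∧ IsPathFrom t h (h a) p j

/-- The quiver has no (nontrivial) oriented cycles. -/
def Acyclic (t h : A → V) : Prop := ∀ (i : V) (p : List A), IsPathFrom t h i p i → p = []

/-- The dimension vector `γ_i` of the projective indecomposable at `i`:
`γ_i(j)` is the number of paths from `i` to `j`. -/
def gammaRoot (t h : A → V) (i : V) : V → ℕ :=
  fun j => Set.ncard {p : List A | IsPathFrom t h i p j}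

/-- A finite-dimensional representation of the quiver `(V, A, t, h)` over `K`. -/
structure QuivRep (K : Type) [Field K] (V A : Type) (t h : A → V) : Type 1 where
  sp : V → Type
  [inst1 : ∀ i, AddCommGroup (sp i)]
  [inst2 : ∀ i, Module K (sp i)]
  [inst3 : ∀ i, FiniteDimensional K (sp i)]
  map : ∀ a : A, sp (t a) →ₗ[K] sp (h a)

attribute [instance] QuivRep.inst1 QuivRep.inst2 QuivRep.inst3

namespace QuivRep

variable {K} {t h : A → V}

/-- The dimension vector of a representation. -/
def dimVec (X : QuivRep K V A t h) : V → ℕ := fun i => Module.finrank K (X.sp i)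

/-- A subrepresentation. -/
structure Sub (X : QuivRep K V A t h) where
  sub : ∀ i, Submodule K (X.sp i)
  le : ∀ a : A, ∀ x ∈ sub (t a), X.map a x ∈ sub (h a)

/-- The dimension vector of a subrepresentation. -/
def Sub.dimVec {X : QuivRep K V A t h} (U : Sub X) : V → ℕ :=
  fun i => Module.finrank K (U.sub i)

/-- The space `Hom_Q(X,Y)` of morphisms of representations, as a submodule of
`Π i, Hom_K(X(i),Y(i))`. -/
def homS (X Y : QuivRep K V A t h) : Submodule K (∀ i, X.sp i →ₗ[K] Y.sp i) where
  carrier := {φ | ∀ a : A, (φ (h a)).comp (X.map a) = (Y.map a).comp (φ (t a))}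
  zero_mem' := by intro a; simp
  add_mem' := by
    intro f g hf hg a
    simp only [Pi.add_apply, LinearMap.add_comp, LinearMap.comp_add, hf a, hg a]
  smul_mem' := by
    intro c f hf a
    simp only [Pi.smul_apply, LinearMap.smul_comp, LinearMap.comp_smul, hf a]

/-- The dimension of `Hom_Q(X,Y)`. -/
def homDim (X Y : QuivRep K V A t h) : ℕ := Module.finrank K (homS X Y)

/-- The map `d^X_Y` from Ringel's canonical exact sequence. -/
def dmap (X Y : QuivRep K V A t h) :
    (∀ i, X.sp i →ₗ[K] Y.sp i) →ₗ[K] (∀ a : A, X.sp (t a) →ₗ[K] Y.sp (h a)) where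
  toFun φ := fun a => (φ (h a)).comp (X.map a) - (Y.map a).comp (φ (t a))
  map_add' f g := by
    funext a
    simp only [Pi.add_apply, LinearMap.add_comp, LinearMap.comp_add]
    abel
  map_smul' c f := by
    funext a
    simp only [Pi.smul_apply, LinearMap.smul_comp, LinearMap.comp_smul, smul_sub,
      RingHom.id_apply]

/-- The dimension of `Ext^1_Q(X,Y)`, i.e. of the cokernel of `d^X_Y`. -/
def extDim (X Y : QuivRep K V A t h) : ℕ :=
  Module.finrank K ((∀ a : A, X.sp (t a) →ₗ[K] Y.sp (h a)) ⧸ LinearMap.range (dmap X Y))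

/-- A rigid representation: `Ext^1_Q(X,X) = 0`. -/
def IsRigid (X : QuivRep K V A t h) : Prop := extDim X X = 0

/-- A Schur representation: `End_Q(X) = K·id`. -/
def IsSchur (X : QuivRep K V A t h) : Prop := homDim X X = 1

/-- An exceptional representation: rigid and Schur. -/
def IsExceptional (X : QuivRep K V A t h) : Prop := IsRigid X ∧ IsSchur X

end QuivRep

/-- `β` is a real Schur root: the dimension vector of an exceptional representation. -/
def isRealSchurRoot (t h : A → V) (β : V → ℕ) : Prop :=
  ∃ X : QuivRep K V A t h, X.dimVec = β ∧ X.IsExceptional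

/-- `ext_Q(α,β)` : the generic (minimal) value of `dim Ext^1_Q` on pairs of
representations of dimension vectors `α`, `β`. -/
def extMin (t h : A → V) (α β : V → ℕ) : ℕ :=
  sInf {n | ∃ X Y : QuivRep K V A t h, X.dimVec = α ∧ Y.dimVec = β ∧ QuivRep.extDim X Y = n}

/-- `hom_Q(α,β)` : the generic (minimal) value of `dim Hom_Q`. -/
def homMin (t h : A → V) (α β : V → ℕ) : ℕ :=
  sInf {n | ∃ X Y : QuivRep K V A t h, X.dimVec = α ∧ Y.dimVec = β ∧ QuivRep.homDim X Y = n}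

/-- `β' ↪ β` : every representation of dimension vector `β` has a subrepresentation of
dimension vector `β'`. -/
def Embeds (t h : A → V) (β' β : V → ℕ) : Prop :=
  ∀ X : QuivRep K V A t h, X.dimVec = β → ∃ U : QuivRep.Sub X, U.dimVec = β'

/-- `σ`-semi-stability of a representation. -/
def IsSemistable {t h : A → V} (σ : V → ℤ) (X : QuivRep K V A t h) : Prop :=
  (∑ i, σ i * (X.dimVec i : ℤ)) = 0 ∧
  ∀ U : QuivRep.Sub X, (∑ i, σ i * (U.dimVec i : ℤ)) ≤ 0

/-- `σ`-stability of a representation. -/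
def IsStable {t h : A → V} (σ : V → ℤ) (X : QuivRep K V A t h) : Prop :=
  (∑ i, σ i * (X.dimVec i : ℤ)) = 0 ∧ X.dimVec ≠ (fun _ => 0) ∧
  ∀ U : QuivRep.Sub X, U.dimVec ≠ (fun _ => 0) → U.dimVec ≠ X.dimVec →
    (∑ i, σ i * (U.dimVec i : ℤ)) < 0

/-- Isomorphism of representations. -/
def RepIso {t h : A → V} (X Y : QuivRep K V A t h) : Prop :=
  ∃ e : ∀ i, X.sp i ≃ₗ[K] Y.sp i,
    ∀ (a : A) (x : X.sp (t a)), e (h a) (X.map a x) = Y.map a (e (t a) x)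

/-- A quiver exceptional sequence of dimension vectors. -/
def IsQES (t h : A → V) {l : ℕ} (b : Fin l → V → ℕ) : Prop :=
  (∀ j, isRealSchurRoot K t h (b j)) ∧
  ∀ i j : Fin l, i < j →
    homMin K t h (b i) (b j) = 0 ∧ extMin K t h (b i) (b j) = 0 ∧
      eulerForm t h (natZ (b j)) (natZ (b i)) ≤ 0

/-- The cone of nonnegative rational linear combinations of a finite set of integral
vectors. -/
def coneOf (C : Finset (V → ℤ)) : Set (V → ℚ) :=
  {x | ∃ lam : (V → ℤ) → ℚ, (∀ c, 0 ≤ lam c) ∧ x = ∑ c ∈ C, lam c • intQ c}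

/-- A compatible subset of the set `Ψ(Q)_{≥ -1}` of almost positive real Schur roots. -/
def IsCompatible (t h : A → V) (C : Finset (V → ℤ)) : Prop :=
  (∀ x ∈ C, (∃ β : V → ℕ, isRealSchurRoot K t h β ∧ x = natZ β) ∨
      (∃ i : V, x = fun j => -(gammaRoot t h i j : ℤ))) ∧
  (∀ x ∈ C, ∀ y ∈ C, x ≠ y →
    (∀ β₁ β₂ : V → ℕ, isRealSchurRoot K t h β₁ → isRealSchurRoot K t h β₂ →
      x = natZ β₁ → y = natZ β₂ → extMin K t h β₁ β₂ = 0) ∧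
    (∀ (β : V → ℕ) (i : V), isRealSchurRoot K t h β →
      x = natZ β → y = (fun j => -(gammaRoot t h i j : ℤ)) → β i = 0))

/-- The domain of semi-invariants `D(β) ⊆ ℚ^{Q_0}`. -/
def Dom (t h : A → V) (β : V → ℕ) : Set (V → ℚ) :=
  {x | eulerForm t h x (natQ β) = 0 ∧
    ∀ β' : V → ℕ, Embeds K t h β' β → eulerForm t h x (natQ β') ≤ 0}

/-- A quiver exceptional set: a subset of `Ψ(Q)_{≥ -1}` of the form
`{β_1,…,β_l, −γ_{i_{l+1}},…,−γ_{i_m}}` with `β_j(i_k) = 0` and whose real-Schur-root part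
can be ordered into a quiver exceptional sequence. -/
def IsQExcSet (t h : A → V) (E : Finset (V → ℤ)) : Prop :=
  ∃ (l m : ℕ) (b : Fin l → V → ℕ) (g : Fin m → V),
    Function.Injective b ∧ Function.Injective g ∧ IsQES K t h b ∧
    (∀ j k, b j (g k) = 0) ∧
    (E : Set (V → ℤ)) =
      (Set.range fun j => natZ (b j)) ∪
      (Set.range fun k => (fun v => -(gammaRoot t h (g k) v : ℤ)))


/-- The underlying graph of the quiver is connected. -/
def IsConnectedQuiver (t h : A → V) : Prop :=
  ∀ i j : V,
    Relation.ReflTransGen (fun u v => ∃ a, (t a = u ∧ h a = v) ∨ (t a = v ∧ h a = u)) i j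

/-- Morphisms of representations. -/
structure RepHom {K : Type} [Field K] {V A : Type} {t h : A → V}
    (X Y : QuivRep K V A t h) : Type where
  app : ∀ i, X.sp i →ₗ[K] Y.sp i
  comm : ∀ a : A, (app (h a)).comp (X.map a) = (Y.map a).comp (app (t a))

namespace RepHom

variable {K₀ : Type} [Field K₀] {t h : A → V}

/-- The identity morphism. -/
def idHom (X : QuivRep K₀ V A t h) : RepHom X X :=
  ⟨fun _ => LinearMap.id, fun a => by ext x; simp⟩

/-- Composition of morphisms. -/
def comp {X Y Z : QuivRep K₀ V A t h} (f : RepHom X Y) (g : RepHom Y Z) : RepHom X Z :=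
  ⟨fun i => (g.app i).comp (f.app i), fun a => by
    ext x
    have hf := LinearMap.congr_fun (f.comm a) x
    have hg := LinearMap.congr_fun (g.comm a) (f.app (t a) x)
    simp only [LinearMap.comp_apply] at hf hg ⊢
    rw [hf, hg]⟩

/-- Sum of morphisms. -/
def add {X Y : QuivRep K₀ V A t h} (f g : RepHom X Y) : RepHom X Y :=
  ⟨fun i => f.app i + g.app i, fun a => by
    simp only [LinearMap.add_comp, LinearMap.comp_add, f.comm a, g.comm a]⟩

/-- Scalar multiple of a morphism. -/
def smul {X Y : QuivRep K₀ V A t h} (c : K₀) (f : RepHom X Y) : RepHom X Y :=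
  ⟨fun i => c • f.app i, fun a => by
    simp only [LinearMap.smul_comp, LinearMap.comp_smul, f.comm a]⟩

end RepHom

/-- The number of arrows `i → j` in the Ext-quiver `Q(𝓔)` of a sequence of dimension
vectors: `−⟨β_i, β_j⟩` for `i ≠ j`. -/
def extMult (t h : A → V) {l : ℕ} (b : Fin l → V → ℕ) (i j : Fin l) : ℕ :=
  if i = j then 0 else (-(eulerForm t h (natZ (b i)) (natZ (b j)))).toNat

/-- The arrow set of the Ext-quiver `Q(𝓔)`. -/
abbrev ExtArrow (t h : A → V) {l : ℕ} (b : Fin l → V → ℕ) : Type :=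
  (i : Fin l) × (j : Fin l) × Fin (extMult t h b i j)

/-- The representation space `rep(Q,β)` as a product of matrix spaces. -/
abbrev RepSpace (t h : A → V) (β : V → ℕ) : Type :=
  ∀ a : A, Matrix (Fin (β (h a))) (Fin (β (t a))) K

/-- The (base-change) action of `GL(β)` on `rep(Q,β)`. -/
def glAct (t h : A → V) {β : V → ℕ}
    (g : ∀ i, Matrix.GeneralLinearGroup (Fin (β i)) K) (W : RepSpace K t h β) :
    RepSpace K t h β :=
  fun a => (g (h a) : Matrix (Fin (β (h a))) (Fin (β (h a))) K) * W a *
    (((g (t a))⁻¹ : Matrix.GeneralLinearGroup (Fin (β (t a))) K) :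
      Matrix (Fin (β (t a))) (Fin (β (t a))) K)

/-- A polynomial function on `rep(Q,β)`. -/
def IsPolyFun (t h : A → V) {β : V → ℕ} (f : RepSpace K t h β → K) : Prop :=
  ∃ P : MvPolynomial ((a : A) × (Fin (β (h a)) × Fin (β (t a)))) K,
    ∀ W, f W = MvPolynomial.eval (fun x => W x.1 x.2.1 x.2.2) P

/-- The weight space `SI(Q,β)_σ` of semi-invariant polynomial functions of weight `σ`. -/
def SIweight (t h : A → V) (β : V → ℕ) (σ : V → ℤ) :
    Submodule K (RepSpace K t h β → K) where
  carrier := {f | IsPolyFun K t h f ∧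
    ∀ (g : ∀ i, Matrix.GeneralLinearGroup (Fin (β i)) K) (W : RepSpace K t h β),
      f (glAct K t h g W) =
        (((∏ i, (Matrix.GeneralLinearGroup.det (g i)) ^ σ i : Kˣ) : K)) * f W}
  zero_mem' := by
    refine ⟨⟨0, by simp⟩, by simp⟩
  add_mem' := by
    rintro f g ⟨⟨P, hP⟩, hf⟩ ⟨⟨Q, hQ⟩, hg⟩
    refine ⟨⟨P + Q, fun W => ?_⟩, fun gg W => ?_⟩
    · simp [hP W, hQ W]
    · simp only [Pi.add_apply, hf gg W, hg gg W]; ring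
  smul_mem' := by
    rintro c f ⟨⟨P, hP⟩, hf⟩
    refine ⟨⟨MvPolynomial.C c * P, fun W => ?_⟩, fun gg W => ?_⟩
    · simp [hP W]
    · simp only [Pi.smul_apply, hf gg W, smul_eq_mul]; ring

/-- Entry of a matrix accessed through natural-number indices. -/
def entryN {m n : ℕ} (M : Matrix (Fin m) (Fin n) K) (r c : ℕ) : K :=
  if hr : r < m then (if hc : c < n then M ⟨r, hr⟩ ⟨c, hc⟩ else 0) else 0

/-- The matrix of the map `d^V_W` (with `V` of dimension vector `α` varying and `W` of
dimension vector `w` fixed), in the standard bases. -/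
def schofieldMatrix (t h : A → V) {α w : V → ℕ}
    (Vm : RepSpace K t h α) (W : RepSpace K t h w) :
    Matrix ((a : A) × (Fin (w (h a)) × Fin (α (t a)))) ((i : V) × (Fin (w i) × Fin (α i))) K :=
  fun r c =>
    (if c.1 = h r.1 ∧ (c.2.1 : ℕ) = (r.2.1 : ℕ) then
      entryN K (Vm r.1) (c.2.2 : ℕ) (r.2.2 : ℕ) else 0)
    - (if c.1 = t r.1 ∧ (c.2.2 : ℕ) = (r.2.2 : ℕ) then
      entryN K (W r.1) (r.2.1 : ℕ) (c.2.1 : ℕ) else 0)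

/-- The Schofield semi-invariant `c_W : rep(Q,α) → K`, `V ↦ det d^V_W` (defined when
`⟨α, dim W⟩ = 0`, i.e. when `d^V_W` is a square matrix). -/
def schofieldSI (t h : A → V) {α w : V → ℕ} (W : RepSpace K t h w)
    (Vm : RepSpace K t h α) : K :=
  if hc : Fintype.card ((i : V) × (Fin (w i) × Fin (α i))) =
      Fintype.card ((a : A) × (Fin (w (h a)) × Fin (α (t a)))) then
    ((schofieldMatrix K t h Vm W).submatrix (Fintype.equivOfCardEq hc) id).det
  else 0

/-- The representation of `Q` attached to a point of `rep(Q,β)`. -/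
def toRep (t h : A → V) {β : V → ℕ} (W : RepSpace K t h β) : QuivRep K V A t h where
  sp i := Fin (β i) → K
  map a := Matrix.mulVecLin (W a)

/-!
Let `B` be the exceptional representation of dimension vector `β`. Since `B` is rigid, its
subrepresentations are generic, so `D(β)` is cut out by `⟨α, dim B⟩ = 0` and
`⟨α, dim U⟩ ≤ 0` for the subrepresentations `U` of `B`.

A weight `α` of `D(β)` is first made nonnegative by adding a combination of the `γ_j`; testing
`α` on a suitable subrepresentation shows that only vertices `j` with `β(j) = 0` occur. Let `S` be
the set of these vertices, and consider the representations `W` which vanish on `S` and satisfy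
`Hom(W, B) = Ext¹(W, B) = 0`. They form an abelian, extension-closed category whose simple objects
have linearly independent dimension vectors, as one sees by pairing with their injective hulls;
hence there are at most `|Q_0| − 1 − |S|` of them. The injective hulls are built by universal
extensions of the injectives `I_j` by `B`, which is why a nonnegative semistable weight pairs
nonnegatively with them: it is a nonnegative combination of the dimension vectors of the simple
objects. Ordered by decreasing dimension of the hulls, the simple objects form an exceptional
sequence, because a nonzero `Ext¹(W, W')` makes the hull of `W'` larger than that of `W`.
-/

section RepHom

variable {K : Type} [Field K] {V A : Type} {t h : A → V} {X Y Z : QuivRep K V A t h}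

theorem RepHom.app_map (f : RepHom X Y) (a : A) (x : X.sp (t a)) :
    f.app (h a) (X.map a x) = Y.map a (f.app (t a) x) :=
  LinearMap.congr_fun (f.comm a) x

/-- The morphism of representations given by a family of linear maps which commutes with the
arrows on elements. -/
def RepHom.ofApp (f : ∀ i, X.sp i →ₗ[K] Y.sp i)
    (hf : ∀ a x, f (h a) (X.map a x) = Y.map a (f (t a) x)) : RepHom X Y :=
  ⟨f, fun a => LinearMap.ext (hf a)⟩

/-- The zero morphism, as a predicate. -/
def RepHom.IsZero (f : RepHom X Y) : Prop := ∀ i x, f.app i x = 0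

/-- `Hom_Q(X,Y) = 0`. -/
def QuivRep.HomVanishes (X Y : QuivRep K V A t h) : Prop := ∀ f : RepHom X Y, f.IsZero

/-- `Ext^1_Q(X,Y) = 0`, as the surjectivity of `dmap X Y` spelled out on elements. -/
def QuivRep.ExtVanishes (X Y : QuivRep K V A t h) : Prop :=
  ∀ ψ : (∀ a, X.sp (t a) →ₗ[K] Y.sp (h a)), ∃ φ : ∀ i, X.sp i →ₗ[K] Y.sp i,
    ∀ a x, φ (h a) (X.map a x) - Y.map a (φ (t a) x) = ψ a x

/-- A representation with a nonzero vector. -/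
def QuivRep.IsNonzero (X : QuivRep K V A t h) : Prop := ∃ i, ∃ x : X.sp i, x ≠ 0

/-- A representation supported outside `S`, i.e. a representation of the full subquiver on the
complement of `S`. -/
def QuivRep.VanishesOn (S : Finset V) (X : QuivRep K V A t h) : Prop :=
  ∀ i ∈ S, ∀ x : X.sp i, x = 0

end RepHom

namespace QuivRep

section Dimensions

variable {K : Type} [Field K] {V A : Type} {t h : A → V} {X Y : QuivRep K V A t h}

theorem ker_dmap (X Y : QuivRep K V A t h) : LinearMap.ker (dmap X Y) = homS X Y := by
  ext f
  exact funext_iff.trans (forall_congr' fun _ => sub_eq_zero)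

theorem extVanishes_iff_surjective_dmap :
    ExtVanishes X Y ↔ Function.Surjective (dmap X Y) :=
  forall_congr' fun _ => exists_congr fun _ => .symm <|
    funext_iff.trans (forall_congr' fun _ => LinearMap.ext_iff)

theorem dimVec_eq_zero_iff {i : V} : X.dimVec i = 0 ↔ ∀ x : X.sp i, x = 0 := by
  rw [dimVec, Module.finrank_zero_iff, subsingleton_iff_forall_eq 0]

theorem vanishesOn_iff_dimVec {S : Finset V} : VanishesOn S X ↔ ∀ i ∈ S, X.dimVec i = 0 :=
  forall₂_congr fun _ _ => dimVec_eq_zero_iff.symm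

theorem extVanishes_iff_extDim [Finite A] : ExtVanishes X Y ↔ extDim X Y = 0 := by
  rw [extVanishes_iff_surjective_dmap, extDim, Module.finrank_zero_iff,
    Submodule.Quotient.subsingleton_iff, LinearMap.range_eq_top]

theorem homVanishes_iff_homDim [Finite V] : HomVanishes X Y ↔ homDim X Y = 0 := by
  rw [homDim, Submodule.finrank_eq_zero, Submodule.eq_bot_iff]
  constructor
  · intro H f hf
    funext i
    exact LinearMap.ext (H ⟨f, hf⟩ i)
  · intro H f i x
    rw [H f.app f.comm]
    rfl

variable [Fintype V]

/-- The dimension of the total space `⨁ i, X(i)`. -/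
def totalDim (X : QuivRep K V A t h) : ℕ := ∑ i, X.dimVec i

theorem totalDim_pos_iff : 0 < X.totalDim ↔ X.IsNonzero := by
  simp [totalDim, IsNonzero, Finset.sum_pos_iff, Nat.pos_iff_ne_zero, dimVec_eq_zero_iff]

theorem homDim_sub_extDim [Fintype A] (X Y : QuivRep K V A t h) :
    (homDim X Y : ℤ) - extDim X Y = eulerForm t h (natZ X.dimVec) (natZ Y.dimVec) := by
  have rankNullity := LinearMap.finrank_range_add_finrank_ker (dmap X Y)
  have coker := Submodule.finrank_quotient_add_finrank (LinearMap.range (dmap X Y))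
  have source : Module.finrank K (∀ i, X.sp i →ₗ[K] Y.sp i) = ∑ i, X.dimVec i * Y.dimVec i := by
    simp [Module.finrank_pi_fintype, Module.finrank_linearMap, dimVec]
  have target : Module.finrank K (∀ a : A, X.sp (t a) →ₗ[K] Y.sp (h a)) =
      ∑ a, X.dimVec (t a) * Y.dimVec (h a) := by
    simp [Module.finrank_pi_fintype, Module.finrank_linearMap, dimVec]
  have euler : eulerForm t h (natZ X.dimVec) (natZ Y.dimVec) =
      (∑ i, X.dimVec i * Y.dimVec i : ℕ) - (∑ a, X.dimVec (t a) * Y.dimVec (h a) : ℕ) := by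
    simp [eulerForm, natZ]
  rw [euler, ← source, ← target, homDim, ← ker_dmap, extDim]
  lia

end Dimensions
end QuivRep

section EulerForm

variable {V A : Type} [Fintype V] [Fintype A] {t h : A → V}

theorem eulerForm_natQ (x y : V → ℕ) :
    eulerForm t h (natQ x) (natQ y) = ((eulerForm t h (natZ x) (natZ y) : ℤ) : ℚ) := by
  simp [eulerForm, natZ, natQ]

/-- The rational Euler form as a bilinear map. -/
def eulerBilin (t h : A → V) : (V → ℚ) →ₗ[ℚ] (V → ℚ) →ₗ[ℚ] ℚ :=
  LinearMap.mk₂ ℚ (eulerForm t h)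
    (fun x y z => by simp only [eulerForm, Pi.add_apply, add_mul, Finset.sum_add_distrib]; ring)
    (fun c x z => by simp [eulerForm, mul_assoc, Finset.mul_sum, mul_sub])
    (fun x y z => by simp only [eulerForm, Pi.add_apply, mul_add, Finset.sum_add_distrib]; ring)
    (fun c x z => by simp [eulerForm, mul_left_comm, Finset.mul_sum, mul_sub])

/-- The linear functional `⟨·, dim Y⟩` attached to a representation `Y`. -/
def QuivRep.pairing {K : Type} [Field K] (Y : QuivRep K V A t h) : (V → ℚ) →ₗ[ℚ] ℚ :=
  (eulerBilin t h).flip (natQ Y.dimVec)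

namespace QuivRep

variable {K : Type} [Field K] {X Y : QuivRep K V A t h}

theorem pairing_apply (Y : QuivRep K V A t h) (x : V → ℚ) :
    Y.pairing x = eulerForm t h x (natQ Y.dimVec) := rfl

theorem pairing_natQ_dimVec (X Y : QuivRep K V A t h) :
    Y.pairing (natQ X.dimVec) = (homDim X Y : ℚ) - extDim X Y := by
  rw [pairing_apply, eulerForm_natQ, ← homDim_sub_extDim]
  push_cast
  rfl

theorem pairing_eq_zero_of_dimVec (hY : Y.dimVec = 0) (x : V → ℚ) : Y.pairing x = 0 := by
  simp [pairing_apply, eulerForm, natQ, hY]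

end QuivRep
end EulerForm

namespace QuivRep

variable {K : Type} [Field K] {V A : Type} {t h : A → V}

/-- A short exact sequence `0 → N → M → Q → 0` of representations. -/
structure ShortExact (N M Q : QuivRep K V A t h) where
  ι : RepHom N M
  π : RepHom M Q
  injective : ∀ i, Function.Injective (ι.app i)
  surjective : ∀ i, Function.Surjective (π.app i)
  exact : ∀ i, Function.Exact (ι.app i) (π.app i)

namespace ShortExact

variable {N M Q X : QuivRep K V A t h}

section LinearMaps

variable {W : Type} [AddCommGroup W] [Module K W]

theorem exists_linearMap_lift (s : ShortExact N M Q) (i : V) (φ : W →ₗ[K] M.sp i)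
    (hφ : ∀ x, s.π.app i (φ x) = 0) : ∃ φ' : W →ₗ[K] N.sp i, ∀ x, s.ι.app i (φ' x) = φ x := by
  obtain ⟨r, hr⟩ := (s.ι.app i).exists_leftInverse_of_injective
    (LinearMap.ker_eq_bot.2 (s.injective i))
  refine ⟨r ∘ₗ φ, fun x => ?_⟩
  obtain ⟨y, hy⟩ := (s.exact i _).1 (hφ x)
  rw [LinearMap.comp_apply, ← hy]
  exact congrArg (s.ι.app i) (LinearMap.congr_fun hr y)

theorem exists_linearMap_lift_quotient (s : ShortExact N M Q) (i : V) (φ : W →ₗ[K] Q.sp i) :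
    ∃ φ' : W →ₗ[K] M.sp i, ∀ x, s.π.app i (φ' x) = φ x := by
  obtain ⟨φ', hφ'⟩ := Module.projective_lifting_property (s.π.app i) φ (s.surjective i)
  exact ⟨φ', LinearMap.congr_fun hφ'⟩

theorem exists_linearMap_desc (s : ShortExact N M Q) (i : V) (φ : M.sp i →ₗ[K] W)
    (hφ : ∀ x, φ (s.ι.app i x) = 0) : ∃ φ' : Q.sp i →ₗ[K] W, ∀ x, φ' (s.π.app i x) = φ x := by
  obtain ⟨r, hr⟩ := (s.π.app i).exists_rightInverse_of_surjective
    (LinearMap.range_eq_top.2 (s.surjective i))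
  refine ⟨φ ∘ₗ r, fun x => ?_⟩
  have difference_mem : s.π.app i (r (s.π.app i x) - x) = 0 := by
    rw [map_sub, sub_eq_zero]
    exact LinearMap.congr_fun hr (s.π.app i x)
  obtain ⟨y, hy⟩ := (s.exact i _).1 difference_mem
  rw [LinearMap.comp_apply, ← sub_eq_zero, ← map_sub, ← hy, hφ]

theorem exists_linearMap_extend (s : ShortExact N M Q) (i : V) (φ : N.sp i →ₗ[K] W) :
    ∃ φ' : M.sp i →ₗ[K] W, ∀ x, φ' (s.ι.app i x) = φ x := by
  obtain ⟨r, hr⟩ := (s.ι.app i).exists_leftInverse_of_injective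
    (LinearMap.ker_eq_bot.2 (s.injective i))
  exact ⟨φ ∘ₗ r, fun x => congrArg φ (LinearMap.congr_fun hr x)⟩

end LinearMaps

theorem π_ι (s : ShortExact N M Q) (i : V) (x : N.sp i) : s.π.app i (s.ι.app i x) = 0 :=
  (s.exact i).apply_apply_eq_zero x

theorem exists_hom_desc (s : ShortExact N M Q) (φ : RepHom M X)
    (hφ : (s.ι.comp φ).IsZero) :
    ∃ φ' : RepHom Q X, ∀ i x, φ'.app i (s.π.app i x) = φ.app i x := by
  choose φ' hφ' using fun i => s.exists_linearMap_desc i (φ.app i) (hφ i)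
  refine ⟨.ofApp φ' fun a x => ?_, hφ'⟩
  obtain ⟨y, rfl⟩ := s.surjective _ x
  rw [← s.π.app_map, hφ', hφ', φ.app_map]

theorem exists_hom_extend (s : ShortExact N M Q) (hQX : ExtVanishes Q X) (φ : RepHom N X) :
    ∃ φ' : RepHom M X, ∀ i x, φ'.app i (s.ι.app i x) = φ.app i x := by
  choose φ₀ hφ₀ using fun i => s.exists_linearMap_extend i (φ.app i)
  have defect_desc (a : A) : ∃ ψ : Q.sp (t a) →ₗ[K] X.sp (h a), ∀ x,
      ψ (s.π.app _ x) = (φ₀ (h a) ∘ₗ M.map a - X.map a ∘ₗ φ₀ (t a)) x := by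
    refine s.exists_linearMap_desc _ _ fun x => ?_
    rw [LinearMap.sub_apply, LinearMap.comp_apply, LinearMap.comp_apply, ← s.ι.app_map, hφ₀, hφ₀,
      φ.app_map, sub_self]
  choose ψ hψ using defect_desc
  obtain ⟨φ₁, hφ₁⟩ := hQX ψ
  refine ⟨.ofApp (fun i => φ₀ i - φ₁ i ∘ₗ s.π.app i) fun a x => ?_, fun i x => ?_⟩
  · have defect := (hφ₁ a (s.π.app _ x)).trans (hψ a x)
    simp only [LinearMap.sub_apply, LinearMap.comp_apply, map_sub, s.π.app_map] at defect ⊢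
    rw [sub_eq_sub_iff_sub_eq_sub, ← defect]
  · change φ₀ i _ - φ₁ i (s.π.app i (s.ι.app i x)) = _
    rw [s.π_ι, map_zero, sub_zero, hφ₀]

theorem exists_hom_lift_sub (s : ShortExact N M Q) (φ : RepHom X M)
    (hφ : (φ.comp s.π).IsZero) :
    ∃ φ' : RepHom X N, ∀ i x, s.ι.app i (φ'.app i x) = φ.app i x := by
  choose φ' hφ' using fun i => s.exists_linearMap_lift i (φ.app i) (hφ i)
  refine ⟨.ofApp φ' fun a x => s.injective _ ?_, hφ'⟩
  rw [hφ', s.ι.app_map, hφ', φ.app_map]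

theorem exists_hom_lift (s : ShortExact N M Q) (hXN : ExtVanishes X N) (φ : RepHom X Q) :
    ∃ φ' : RepHom X M, ∀ i x, s.π.app i (φ'.app i x) = φ.app i x := by
  choose φ₀ hφ₀ using fun i => s.exists_linearMap_lift_quotient i (φ.app i)
  choose ψ hψ using fun a => s.exists_linearMap_lift (h a)
    (φ₀ (h a) ∘ₗ X.map a - M.map a ∘ₗ φ₀ (t a)) fun x => by
      simp only [LinearMap.sub_apply, LinearMap.comp_apply, map_sub, hφ₀, s.π.app_map,
        φ.app_map, sub_self]
  obtain ⟨φ₁, hφ₁⟩ := hXN ψ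
  refine ⟨.ofApp (fun i => φ₀ i - s.ι.app i ∘ₗ φ₁ i) fun a x => ?_, fun i x => ?_⟩
  · have defect := hψ a x
    simp only [← hφ₁, LinearMap.sub_apply, LinearMap.comp_apply, map_sub, s.ι.app_map] at defect
    simp only [LinearMap.sub_apply, LinearMap.comp_apply, map_sub]
    rw [sub_eq_sub_iff_sub_eq_sub, defect]
  · change s.π.app i (φ₀ i x - s.ι.app i (φ₁ i x)) = _
    rw [map_sub, s.π_ι, sub_zero, hφ₀]

theorem extVanishes_right_quotient (s : ShortExact N M Q) (hXM : ExtVanishes X M) :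
    ExtVanishes X Q := by
  intro ψ
  choose ψ' hψ' using fun a => s.exists_linearMap_lift_quotient (h a) (ψ a)
  obtain ⟨φ, hφ⟩ := hXM ψ'
  refine ⟨fun i => s.π.app i ∘ₗ φ i, fun a x => ?_⟩
  rw [← hψ', ← hφ, map_sub, s.π.app_map]
  rfl

theorem extVanishes_left_sub (s : ShortExact N M Q) (hMX : ExtVanishes M X) :
    ExtVanishes N X := by
  intro ψ
  choose ψ' hψ' using fun a => s.exists_linearMap_extend (t a) (ψ a)
  obtain ⟨φ, hφ⟩ := hMX ψ'
  refine ⟨fun i => φ i ∘ₗ s.ι.app i, fun a x => ?_⟩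
  rw [← hψ', ← hφ, ← s.ι.app_map]
  rfl

theorem extVanishes_right_sub (s : ShortExact N M Q) (hXQ : HomVanishes X Q)
    (hXM : ExtVanishes X M) : ExtVanishes X N := by
  intro ψ
  obtain ⟨φ, hφ⟩ := hXM fun a => s.ι.app (h a) ∘ₗ ψ a
  have πφ_comm (a : A) (x : X.sp (t a)) :
      s.π.app _ (φ _ (X.map a x)) = Q.map a (s.π.app _ (φ _ x)) := by
    rw [← s.π.app_map, ← sub_eq_zero, ← map_sub, hφ]
    exact s.π_ι _ _
  choose φ' hφ' using fun i => s.exists_linearMap_lift i (φ i)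
    (hXQ (.ofApp (fun i => s.π.app i ∘ₗ φ i) πφ_comm) i)
  refine ⟨φ', fun a x => s.injective _ ?_⟩
  rw [map_sub, hφ', s.ι.app_map, hφ', hφ]
  rfl

theorem extVanishes_left_quotient (s : ShortExact N M Q) (hNX : HomVanishes N X)
    (hMX : ExtVanishes M X) : ExtVanishes Q X := by
  intro ψ
  obtain ⟨φ, hφ⟩ := hMX fun a => ψ a ∘ₗ s.π.app (t a)
  have φι_comm (a : A) (x : N.sp (t a)) :
      φ _ (s.ι.app _ (N.map a x)) = X.map a (φ _ (s.ι.app _ x)) := by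
    rw [s.ι.app_map, ← sub_eq_zero, hφ, LinearMap.comp_apply, s.π_ι, map_zero]
  choose φ' hφ' using fun i => s.exists_linearMap_desc i (φ i)
    (hNX (.ofApp (fun i => φ i ∘ₗ s.ι.app i) φι_comm) i)
  refine ⟨φ', fun a x => ?_⟩
  obtain ⟨y, rfl⟩ := s.surjective _ x
  rw [← s.π.app_map, hφ', hφ', hφ]
  rfl

theorem extVanishes_right_middle (s : ShortExact N M Q) (hXN : ExtVanishes X N)
    (hXQ : ExtVanishes X Q) : ExtVanishes X M := by
  intro ψ
  obtain ⟨φ₀, hφ₀⟩ := hXQ fun a => s.π.app (h a) ∘ₗ ψ a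
  choose φ₁ hφ₁ using fun i => s.exists_linearMap_lift_quotient i (φ₀ i)
  choose ψ' hψ' using fun a => s.exists_linearMap_lift (h a)
    (ψ a - (φ₁ (h a) ∘ₗ X.map a - M.map a ∘ₗ φ₁ (t a))) fun x => by
      have := hφ₀ a x
      simp only [LinearMap.comp_apply] at this
      simp only [LinearMap.sub_apply, LinearMap.comp_apply, map_sub, hφ₁, s.π.app_map, this,
        sub_self]
  obtain ⟨φ₂, hφ₂⟩ := hXN ψ'
  refine ⟨fun i => φ₁ i + s.ι.app i ∘ₗ φ₂ i, fun a x => ?_⟩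
  have correction := hψ' a x
  rw [← hφ₂, map_sub, s.ι.app_map, LinearMap.sub_apply, eq_sub_iff_add_eq] at correction
  rw [← correction]
  simp only [LinearMap.sub_apply, LinearMap.comp_apply, LinearMap.add_apply, map_add]
  abel

theorem homVanishes_left_quotient (s : ShortExact N M Q) (hMX : HomVanishes M X) :
    HomVanishes Q X := by
  intro φ i x
  obtain ⟨y, rfl⟩ := s.surjective _ x
  exact hMX (s.π.comp φ) i y

theorem homVanishes_right_sub (s : ShortExact N M Q) (hXM : HomVanishes X M) :
    HomVanishes X N := by
  intro φ i x
  apply s.injective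
  rw [map_zero]
  exact hXM (φ.comp s.ι) i x

theorem homVanishes_left_sub (s : ShortExact N M Q) (hMX : HomVanishes M X)
    (hQX : ExtVanishes Q X) : HomVanishes N X := by
  intro φ i x
  obtain ⟨φ', hφ'⟩ := s.exists_hom_extend hQX φ
  rw [← hφ', hMX]

theorem vanishesOn_sub (s : ShortExact N M Q) {S : Finset V} (hM : VanishesOn S M) :
    VanishesOn S N :=
  fun i hi x => s.injective i <| by rw [hM i hi (s.ι.app i x), map_zero]

theorem vanishesOn_quotient (s : ShortExact N M Q) {S : Finset V} (hM : VanishesOn S M) :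
    VanishesOn S Q := by
  intro i hi x
  obtain ⟨y, rfl⟩ := s.surjective _ x
  rw [hM i hi y, map_zero]

theorem vanishesOn_middle (s : ShortExact N M Q) {S : Finset V} (hN : VanishesOn S N)
    (hQ : VanishesOn S Q) : VanishesOn S M := by
  intro i hi x
  obtain ⟨y, rfl⟩ := (s.exact i x).1 (hQ i hi _)
  rw [hN i hi y, map_zero]

theorem dimVec_eq (s : ShortExact N M Q) : M.dimVec = N.dimVec + Q.dimVec := by
  funext i
  have rankNullity := LinearMap.finrank_range_add_finrank_ker (s.π.app i)
  rw [LinearMap.exact_iff.1 (s.exact i), LinearMap.finrank_range_of_inj (s.injective i),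
    LinearMap.range_eq_top.2 (s.surjective i), finrank_top, add_comm] at rankNullity
  exact rankNullity.symm

theorem natQ_dimVec_eq (s : ShortExact N M Q) :
    natQ M.dimVec = natQ N.dimVec + natQ Q.dimVec := by
  funext i
  simp [natQ, s.dimVec_eq]

theorem totalDim_eq [Fintype V] (s : ShortExact N M Q) :
    M.totalDim = N.totalDim + Q.totalDim := by
  simp only [totalDim, s.dimVec_eq, Pi.add_apply, Finset.sum_add_distrib]

theorem pairing_eq [Fintype V] [Fintype A] (s : ShortExact N M Q) (x : V → ℚ) :
    M.pairing x = N.pairing x + Q.pairing x := by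
  simp only [pairing, s.natQ_dimVec_eq, map_add, LinearMap.add_apply]

theorem homDim_sub_extDim_left [Finite V] [Finite A] (s : ShortExact N M Q)
    (X : QuivRep K V A t h) :
    (homDim M X : ℚ) - extDim M X =
      ((homDim N X : ℚ) - extDim N X) + ((homDim Q X : ℚ) - extDim Q X) := by
  have := Fintype.ofFinite V
  have := Fintype.ofFinite A
  simp only [← pairing_natQ_dimVec, s.natQ_dimVec_eq, map_add]

end ShortExact

variable {X Y : QuivRep K V A t h}

/-- A subrepresentation as a representation. -/
def Sub.rep (U : Sub X) : QuivRep K V A t h where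
  sp i := U.sub i
  map a := (X.map a).restrict (U.le a)

/-- The quotient by a subrepresentation. -/
def Sub.quotient (U : Sub X) : QuivRep K V A t h where
  sp i := X.sp i ⧸ U.sub i
  map a := Submodule.mapQ _ _ (X.map a) (U.le a)

/-- The exact sequence `0 → U → X → X/U → 0`. -/
def Sub.shortExact (U : Sub X) : ShortExact U.rep X U.quotient where
  ι := .ofApp (fun i => (U.sub i).subtype) fun _ _ => rfl
  π := .ofApp (fun i => (U.sub i).mkQ) fun _ _ => rfl
  injective i := (U.sub i).injective_subtype
  surjective i := (U.sub i).mkQ_surjective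
  exact i := LinearMap.exact_subtype_mkQ (U.sub i)

/-- The kernel of a morphism. -/
def _root_.RepHom.ker (f : RepHom X Y) : Sub X where
  sub i := LinearMap.ker (f.app i)
  le a x hx := by rw [LinearMap.mem_ker, f.app_map, LinearMap.mem_ker.1 hx, map_zero]

/-- The image of a morphism. -/
def _root_.RepHom.range (f : RepHom X Y) : Sub Y where
  sub i := LinearMap.range (f.app i)
  le a x hx := by
    obtain ⟨y, rfl⟩ := hx
    exact ⟨X.map a y, f.app_map a y⟩

/-- The exact sequence `0 → ker f → X → Y → 0` of a surjective morphism. -/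
def ShortExact.ofSurjective (f : RepHom X Y) (hf : ∀ i, Function.Surjective (f.app i)) :
    ShortExact f.ker.rep X Y where
  ι := f.ker.shortExact.ι
  π := f
  injective := f.ker.shortExact.injective
  surjective := hf
  exact i := (f.app i).exact_subtype_ker_map

/-- The exact sequence `0 → X → Y → coker f → 0` of an injective morphism. -/
def ShortExact.ofInjective (f : RepHom X Y) (hf : ∀ i, Function.Injective (f.app i)) :
    ShortExact X Y f.range.quotient where
  ι := f
  π := f.range.shortExact.π
  injective := hf
  surjective := f.range.shortExact.surjective
  exact i := (f.app i).exact_map_mkQ_range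

/-- The corestriction of a morphism to its image. -/
def _root_.RepHom.rangeRestrict (f : RepHom X Y) : RepHom X f.range.rep :=
  .ofApp (fun i => (f.app i).rangeRestrict) fun a x => Subtype.ext (f.app_map a x)

/-- The exact sequence `0 → ker f → X → im f → 0`. -/
def _root_.RepHom.kerRangeShortExact (f : RepHom X Y) :
    ShortExact f.rangeRestrict.ker.rep X f.range.rep :=
  .ofSurjective f.rangeRestrict fun i => (f.app i).surjective_rangeRestrict

end QuivRep

section Paths

variable {V A : Type} {t h : A → V}

theorem IsPathFrom.append {i j k : V} {p q : List A} (hp : IsPathFrom t h i p j)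
    (hq : IsPathFrom t h j q k) : IsPathFrom t h i (p ++ q) k := by
  induction p generalizing i with
  | nil => cases hp; exact hq
  | cons a p ih => exact ⟨hp.1, ih hp.2⟩

theorem exists_isPathFrom_of_transGen {i j : V}
    (hij : Relation.TransGen (fun i j => ∃ a, t a = i ∧ h a = j) i j) :
    ∃ p, p ≠ [] ∧ IsPathFrom t h i p j := by
  induction hij with
  | single hr =>
    obtain ⟨a, ha⟩ := hr
    exact ⟨[a], List.cons_ne_nil _ _, ha⟩
  | tail _ hr ih =>
    obtain ⟨a, ha⟩ := hr
    obtain ⟨p, -, hpath⟩ := ih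
    exact ⟨p ++ [a], by simp, hpath.append ha⟩

theorem Acyclic.wellFounded_transGen [Finite V] (hQ : Acyclic t h) :
    WellFounded (Relation.TransGen fun i j => ∃ a, t a = i ∧ h a = j) := by
  have : Std.Irrefl (Relation.TransGen fun i j : V => ∃ a, t a = i ∧ h a = j) := ⟨fun i hi => by
    obtain ⟨p, hp, hpath⟩ := exists_isPathFrom_of_transGen hi
    exact hp (hQ i p hpath)⟩
  exact Finite.wellFounded_of_trans_of_irrefl _

theorem Acyclic.wellFounded_tail_head [Finite V] (hQ : Acyclic t h) :
    WellFounded fun i j : V => ∃ a, t a = i ∧ h a = j :=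
  hQ.wellFounded_transGen.mono fun _ _ hij => .single hij

theorem Acyclic.wellFounded_head_tail [Finite V] (hQ : Acyclic t h) :
    WellFounded fun i j : V => ∃ a, t a = j ∧ h a = i := by
  have : Std.Irrefl (Function.swap (Relation.TransGen fun i j : V => ∃ a, t a = i ∧ h a = j)) :=
    ⟨fun i hi => hQ.wellFounded_transGen.irrefl.irrefl i hi⟩
  have : IsTrans V (Function.swap (Relation.TransGen fun i j : V => ∃ a, t a = i ∧ h a = j)) :=
    ⟨fun _ _ _ hij hjk => hjk.trans hij⟩
  exact (Finite.wellFounded_of_trans_of_irrefl (Function.swap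
    (Relation.TransGen fun i j : V => ∃ a, t a = i ∧ h a = j))).mono fun _ _ hij => .single hij

theorem Acyclic.finite_paths [Finite V] [Finite A] (hQ : Acyclic t h) (i j : V) :
    {p | IsPathFrom t h i p j}.Finite := by
  induction i using hQ.wellFounded_head_tail.induction with
  | _ i ih =>
    have first_arrow : {p | IsPathFrom t h i p j} ⊆ {[]} ∪ ⋃ a : {a // t a = i},
        (a.1 :: ·) '' {p | IsPathFrom t h (h a) p j} := by
      rintro (_ | ⟨a, p⟩) hp
      · exact Or.inl rfl
      · exact Or.inr (Set.mem_iUnion.2 ⟨⟨a, hp.1⟩, p, hp.2, rfl⟩)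
    refine .subset (.union (Set.finite_singleton _) (Set.finite_iUnion fun a => ?_)) first_arrow
    exact (ih _ ⟨a.1, a.2, rfl⟩).image _

/-- The list of arrows `p` is a path from `i` to `j` all of whose vertices lie outside `S`: a
path of the full subquiver on the complement of `S`. -/
def IsPathAvoiding (t h : A → V) (S : Finset V) : V → List A → V → Prop
  | i, [], j => i = j ∧ i ∉ S
  | i, a :: p, j => t a = i ∧ i ∉ S ∧ IsPathAvoiding t h S (h a) p j

namespace IsPathAvoiding

variable {S : Finset V} {i j : V} {p : List A}

theorem isPathFrom (hp : IsPathAvoiding t h S i p j) : IsPathFrom t h i p j := by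
  induction p generalizing i with
  | nil => exact hp.1
  | cons a p ih => exact ⟨hp.1, ih hp.2.2⟩

theorem source_notMem (hp : IsPathAvoiding t h S i p j) : i ∉ S := by
  cases p with
  | nil => exact hp.2
  | cons a p => exact hp.2.1

end IsPathAvoiding

theorem isPathAvoiding_empty_iff {i j : V} {p : List A} :
    IsPathAvoiding t h ∅ i p j ↔ IsPathFrom t h i p j := by
  induction p generalizing i with
  | nil => simp [IsPathAvoiding, IsPathFrom]
  | cons a p ih => simp [IsPathAvoiding, IsPathFrom, ih]

/-- The type of paths from `i` to `j` in the full subquiver on the complement of `S`. -/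
abbrev PathAvoiding (t h : A → V) (S : Finset V) (i j : V) : Type :=
  {p : List A // IsPathAvoiding t h S i p j}

theorem Acyclic.finite_pathAvoiding [Finite V] [Finite A] (hQ : Acyclic t h) (S : Finset V)
    (i j : V) : Finite (PathAvoiding t h S i j) :=
  ((hQ.finite_paths i j).subset fun _ hp => hp.isPathFrom :
    {p | IsPathAvoiding t h S i p j}.Finite)

/-- The trivial path. -/
def PathAvoiding.nil {S : Finset V} {i : V} (hi : i ∉ S) : PathAvoiding t h S i i :=
  ⟨[], rfl, hi⟩

/-- The path starting with a given arrow. -/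
def PathAvoiding.cons {S : Finset V} {a : A} {j : V} (ha : t a ∉ S)
    (p : PathAvoiding t h S (h a) j) : PathAvoiding t h S (t a) j :=
  ⟨a :: p.1, rfl, ha, p.2⟩

/-- A path is either trivial or a first arrow followed by a path. -/
def PathAvoiding.equivSum {S : Finset V} {i : V} (hi : i ∉ S) (j : V) :
    PathAvoiding t h S i j ≃ PLift (i = j) ⊕ Σ a : {a // t a = i}, PathAvoiding t h S (h a) j where
  toFun
    | ⟨[], hp⟩ => .inl ⟨hp.1⟩
    | ⟨a :: p, hp⟩ => .inr ⟨⟨a, hp.1⟩, ⟨p, hp.2.2⟩⟩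
  invFun
    | .inl e => ⟨[], e.down, hi⟩
    | .inr ⟨a, p⟩ => ⟨a.1 :: p.1, a.2, hi, p.2⟩
  left_inv := by rintro ⟨_ | ⟨a, p⟩, hp⟩ <;> rfl
  right_inv := by rintro (e | ⟨a, p⟩) <;> rfl

theorem Acyclic.card_pathAvoiding [Finite V] [DecidableEq V] [Fintype A] (hQ : Acyclic t h)
    {S : Finset V} {i : V} (hi : i ∉ S) (j : V) :
    Nat.card (PathAvoiding t h S i j) = (if i = j then 1 else 0) +
      ∑ a : {a // t a = i}, Nat.card (PathAvoiding t h S (h a) j) := by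
  have := fun i => hQ.finite_pathAvoiding S i j
  rw [Nat.card_congr (PathAvoiding.equivSum hi j), Nat.card_sum, Nat.card_sigma]
  congr 1
  split_ifs with hij
  · have : Unique (PLift (i = j)) := ⟨⟨⟨hij⟩⟩, fun _ => rfl⟩
    exact Nat.card_unique
  · have : IsEmpty (PLift (i = j)) := ⟨fun e => hij e.down⟩
    exact Nat.card_of_isEmpty

end Paths

section FirstArrow

variable {V A R : Type} [Fintype V] [DecidableEq V] [Fintype A] [CommRing R] {t h : A → V}

theorem eulerForm_eq_sum_out (x y : V → R) :
    eulerForm t h x y = ∑ i, x i * (y i - ∑ a : {a // t a = i}, y (h a)) := by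
  simp only [mul_sub, Finset.sum_sub_distrib, Finset.mul_sum, eulerForm,
    ← Fintype.sum_fiberwise t fun a => x (t a) * y (h a)]
  refine congrArg _ (Finset.sum_congr rfl fun i _ => Finset.sum_congr rfl fun a _ => ?_)
  rw [a.2]

theorem eulerForm_eq_sum_in (x y : V → R) :
    eulerForm t h x y = ∑ i, (x i - ∑ a : {a // h a = i}, x (t a)) * y i := by
  simp only [sub_mul, Finset.sum_sub_distrib, Finset.sum_mul, eulerForm,
    ← Fintype.sum_fiberwise h fun a => x (t a) * y (h a)]
  refine congrArg _ (Finset.sum_congr rfl fun i _ => Finset.sum_congr rfl fun a _ => ?_)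
  rw [a.2]

end FirstArrow

namespace QuivRep

variable {K : Type} [Field K] {V A : Type} {t h : A → V} {X Y : QuivRep K V A t h}

section OutMap

/-- The map of an arrow with a prescribed tail. -/
def outMap (X : QuivRep K V A t h) : (i : V) → (a : {a // t a = i}) → X.sp i →ₗ[K] X.sp (h a)
  | _, ⟨a, rfl⟩ => X.map a

/-- The map `X(i) → ∏ X(h a)` whose components are the maps of the arrows `a` with tail `i`. -/
def outPi (X : QuivRep K V A t h) (i : V) :
    X.sp i →ₗ[K] ∀ a : {a // t a = i}, X.sp (h a) :=
  LinearMap.pi (X.outMap i)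

theorem _root_.RepHom.app_outMap (f : RepHom X Y) {i : V} (a : {a // t a = i}) (x : X.sp i) :
    f.app (h a) (X.outMap i a x) = Y.outMap i a (f.app i x) := by
  obtain ⟨a, rfl⟩ := a
  exact f.app_map a x

theorem surjective_outPi_of_surjective (f : RepHom X Y)
    (hf : ∀ i, Function.Surjective (f.app i)) {i : V} (hX : Function.Surjective (X.outPi i)) :
    Function.Surjective (Y.outPi i) := by
  intro y
  choose x hx using fun a : {a // t a = i} => hf (h a) (y a)
  obtain ⟨z, rfl⟩ := hX x
  refine ⟨f.app i z, funext fun a => ?_⟩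
  rw [← hx]
  exact (f.app_outMap a z).symm

theorem finrank_outPi_codomain [DecidableEq V] [Fintype A] (X : QuivRep K V A t h) (i : V) :
    Module.finrank K (∀ a : {a // t a = i}, X.sp (h a)) =
      ∑ a : {a // t a = i}, X.dimVec (h a) :=
  Module.finrank_pi_fintype K

variable [Fintype V] [Fintype A]

theorem pairing_nonneg_of_surjective_outPi {x : V → ℚ} (hx : ∀ i, 0 ≤ x i)
    (hX : ∀ i, x i ≠ 0 → Function.Surjective (X.outPi i)) : 0 ≤ X.pairing x := by
  classical
  rw [pairing_apply, eulerForm_eq_sum_out]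
  refine Finset.sum_nonneg fun i _ => ?_
  by_cases hi : x i = 0
  · rw [hi, zero_mul]
  have dim_le : ∑ a : {a // t a = i}, X.dimVec (h a) ≤ X.dimVec i :=
    X.finrank_outPi_codomain i ▸ LinearMap.finrank_le_finrank_of_surjective (hX i hi)
  refine mul_nonneg (hx i) (sub_nonneg.2 ?_)
  simp only [natQ]
  exact_mod_cast dim_le

theorem pairing_nonpos_of_injective_outPi {x : V → ℚ} (hx : ∀ i, 0 ≤ x i)
    (hX : ∀ i, x i ≠ 0 → Function.Injective (X.outPi i)) : X.pairing x ≤ 0 := by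
  classical
  rw [pairing_apply, eulerForm_eq_sum_out]
  refine Finset.sum_nonpos fun i _ => ?_
  by_cases hi : x i = 0
  · rw [hi, zero_mul]
  have dim_le : X.dimVec i ≤ ∑ a : {a // t a = i}, X.dimVec (h a) :=
    X.finrank_outPi_codomain i ▸ LinearMap.finrank_le_finrank_of_injective (hX i hi)
  refine mul_nonpos_of_nonneg_of_nonpos (hx i) (sub_nonpos.2 ?_)
  simp only [natQ]
  exact_mod_cast dim_le

end OutMap

section InjRep

variable [Finite V] [Finite A] (hQ : Acyclic t h) {S : Finset V} {i j : V}

open Classical in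
/-- The indecomposable injective representation at `j` of the full subquiver on the complement
of `S`: an element at the vertex `i` is a function on the paths from `i` to `j` avoiding `S`, and
an arrow `a` acts by `f ↦ (p ↦ f (a :: p))`. -/
def injRep (K : Type) [Field K] (hQ : Acyclic t h) (S : Finset V) (j : V) :
    QuivRep K V A t h where
  sp i := PathAvoiding t h S i j → K
  inst3 i := have := hQ.finite_pathAvoiding S i j; inferInstance
  map a := LinearMap.pi fun p =>
    if ha : t a ∉ S then LinearMap.proj ⟨a :: p.1, rfl, ha, p.2⟩ else 0

/-- The space of `injRep K hQ S j` at `i` as a space of functions on paths. -/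
def injRepFun (hQ : Acyclic t h) (S : Finset V) (i j : V) :
    (injRep K hQ S j).sp i ≃ₗ[K] (PathAvoiding t h S i j → K) :=
  .refl K _

theorem injRepFun_map {a : A} (ha : t a ∉ S) (f : (injRep K hQ S j).sp (t a))
    (p : PathAvoiding t h S (h a) j) :
    injRepFun hQ S (h a) j ((injRep K hQ S j).map a f) p =
      injRepFun hQ S (t a) j f (p.cons ha) := by
  have component : (injRep K hQ S j).map a = LinearMap.pi fun p =>
      LinearMap.proj (p.cons ha) ∘ₗ (injRepFun hQ S (t a) j).toLinearMap :=
    congrArg LinearMap.pi (funext fun p => dif_pos ha)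
  rw [component]
  rfl

theorem vanishesOn_injRep (S : Finset V) (j : V) : VanishesOn S (injRep K hQ S j) :=
  fun _ hi _ => funext fun p => absurd hi p.2.source_notMem

variable {hQ}

/-- The components of a family of maps `φ i : X(i) → I(i)`, `I = injRep K hQ S j`, with prescribed
defect `ψ` against the arrows and prescribed component `ℓ` at the trivial path. -/
def coinduce (ℓ : X.sp j →ₗ[K] K) (ψ : ∀ a, X.sp (t a) →ₗ[K] (injRep K hQ S j).sp (h a)) :
    (p : List A) → (i : V) → IsPathAvoiding t h S i p j → X.sp i →ₗ[K] K
  | [], _, ⟨rfl, _⟩ => ℓ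
  | a :: p, _, ⟨rfl, _, hp⟩ => coinduce ℓ ψ p (h a) hp ∘ₗ X.map a -
      LinearMap.proj ⟨p, hp⟩ ∘ₗ (injRepFun hQ S (h a) j).toLinearMap ∘ₗ ψ a

theorem coinduce_cons (ℓ : X.sp j →ₗ[K] K)
    (ψ : ∀ a, X.sp (t a) →ₗ[K] (injRep K hQ S j).sp (h a)) {a : A} (ha : t a ∉ S)
    (p : PathAvoiding t h S (h a) j) (x : X.sp (t a)) :
    coinduce ℓ ψ (a :: p.1) (t a) (p.cons ha).2 x =
      coinduce ℓ ψ p.1 (h a) p.2 (X.map a x) - injRepFun hQ S (h a) j (ψ a x) p := by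
  rw [coinduce] <;> first | rfl | exact ha

theorem exists_family_injRep (hX : VanishesOn S X) (ℓ : X.sp j →ₗ[K] K)
    (ψ : ∀ a, X.sp (t a) →ₗ[K] (injRep K hQ S j).sp (h a)) :
    ∃ φ : ∀ i, X.sp i →ₗ[K] (injRep K hQ S j).sp i,
      (∀ a x, φ (h a) (X.map a x) - (injRep K hQ S j).map a (φ (t a) x) = ψ a x) ∧
      ∀ (hj : j ∉ S) (x : X.sp j), injRepFun hQ S j j (φ j x) (.nil hj) = ℓ x := by
  let φ : ∀ i, X.sp i →ₗ[K] (injRep K hQ S j).sp i := fun i =>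
    (injRepFun hQ S i j).symm.toLinearMap ∘ₗ LinearMap.pi fun p => coinduce ℓ ψ p.1 i p.2
  have component : ∀ i x p, injRepFun hQ S i j (φ i x) p = coinduce ℓ ψ p.1 i p.2 x :=
    fun _ _ _ => rfl
  refine ⟨φ, fun a x => (injRepFun hQ S (h a) j).injective (funext fun p => ?_), fun hj x => ?_⟩
  · by_cases ha : t a ∈ S
    · simp only [hX _ ha x, map_zero, sub_zero]
    · rw [map_sub, Pi.sub_apply, injRepFun_map hQ ha, component, component, PathAvoiding.cons,
        coinduce_cons ℓ ψ ha, sub_sub_cancel]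
  · rw [component, PathAvoiding.nil, coinduce]
    exact hj

theorem extVanishes_injRep (hX : VanishesOn S X) (j : V) : ExtVanishes X (injRep K hQ S j) :=
  fun ψ => let ⟨φ, hφ, _⟩ := exists_family_injRep hX 0 ψ; ⟨φ, hφ⟩

theorem exists_hom_injRep_ne_zero (hj : j ∉ S) (hX : VanishesOn S X) {x : X.sp j} (hx : x ≠ 0) :
    ∃ f : RepHom X (injRep K hQ S j), f.app j x ≠ 0 := by
  obtain ⟨ℓ, hℓ⟩ := Module.Projective.exists_dual_ne_zero K hx
  obtain ⟨φ, hφ, hφj⟩ := exists_family_injRep (hQ := hQ) hX ℓ 0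
  refine ⟨.ofApp φ fun a x => sub_eq_zero.1 (hφ a x), fun H => hℓ ?_⟩
  rw [← hφj hj, show φ j x = 0 from H, map_zero, Pi.zero_apply]

theorem homVanishes_injRep (hj : ∀ x : X.sp j, x = 0) : HomVanishes X (injRep K hQ S j) := by
  have component : ∀ (f : RepHom X (injRep K hQ S j)) (p : List A) (i : V)
      (hp : IsPathAvoiding t h S i p j) (x : X.sp i),
      injRepFun hQ S i j (f.app i x) ⟨p, hp⟩ = 0 := by
    intro f p
    induction p with
    | nil =>
      rintro i ⟨rfl, _⟩ x
      rw [hj x, map_zero, map_zero, Pi.zero_apply]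
    | cons a p ih =>
      rintro i ⟨rfl, ha, hp⟩ x
      have := ih (h a) hp (X.map a x)
      rwa [f.app_map, injRepFun_map hQ ha] at this
  exact fun f i x => (injRepFun hQ S i j).map_eq_zero_iff.1 <|
    funext fun p => component f p.1 i p.2 x

theorem surjective_outPi_injRep (hi : i ∉ S) (j : V) :
    Function.Surjective ((injRep K hQ S j).outPi i) := by
  intro g
  let f : PathAvoiding t h S i j → K
    | ⟨[], _⟩ => 0
    | ⟨a :: p, hp⟩ => injRepFun hQ S (h a) j (g ⟨a, hp.1⟩) ⟨p, hp.2.2⟩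
  refine ⟨(injRepFun hQ S i j).symm f, funext ?_⟩
  rintro ⟨a, rfl⟩
  exact (injRepFun hQ S (h a) j).injective (funext fun p => injRepFun_map hQ hi _ p)

theorem dimVec_injRep (S : Finset V) (i j : V) :
    (injRep K hQ S j).dimVec i = Nat.card (PathAvoiding t h S i j) := by
  have := hQ.finite_pathAvoiding S i j
  have := Fintype.ofFinite (PathAvoiding t h S i j)
  rw [dimVec, (injRepFun hQ S i j).finrank_eq, Nat.card_eq_fintype_card,
    Module.finrank_fintype_fun_eq_card]

theorem dimVec_injRep_self (hj : j ∉ S) : (injRep K hQ S j).dimVec j = 1 := by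
  rw [dimVec_injRep]
  have : Unique (PathAvoiding t h S j j) :=
    ⟨⟨.nil hj⟩, fun p => Subtype.ext (hQ j p.1 p.2.isPathFrom)⟩
  exact Nat.card_unique

end InjRep

theorem gammaRoot_eq_dimVec_injRep [Finite V] [Finite A] {hQ : Acyclic t h} (i j : V) :
    gammaRoot t h i j = (injRep ℚ hQ ∅ j).dimVec i := by
  rw [dimVec_injRep, gammaRoot]
  simp only [← isPathAvoiding_empty_iff]
  rfl

theorem pairing_injRep [Fintype V] [Fintype A] {hQ : Acyclic t h} {S : Finset V} (j : V)
    {x : V → ℚ} (hx : ∀ i ∈ S, x i = 0) : (injRep K hQ S j).pairing x = x j := by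
  classical
  have summand : ∀ i, x i * ((injRep K hQ S j).dimVec i -
      ∑ a : {a // t a = i}, ((injRep K hQ S j).dimVec (h a) : ℚ)) = if i = j then x i else 0 := by
    intro i
    by_cases hi : i ∈ S
    · rw [hx i hi, zero_mul, ite_self]
    · simp only [dimVec_injRep, hQ.card_pathAvoiding hi]
      simp
  rw [pairing_apply, eulerForm_eq_sum_out]
  exact (Finset.sum_congr rfl fun i _ => summand i).trans (by simp)

theorem span_dimVec_injRep [Finite V] [Finite A] (hQ : Acyclic t h) :
    Submodule.span ℚ (Set.range fun j => natQ (injRep ℚ hQ ∅ j).dimVec) = ⊤ := by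
  classical
  have := Fintype.ofFinite V
  have := Fintype.ofFinite A
  have independent : LinearIndependent ℚ fun j => natQ (injRep ℚ hQ ∅ j).dimVec := by
    refine .of_pairwise_dual_eq_zero_one _ (fun i => eulerBilin t h (Pi.single i 1)) ?_ ?_
    · intro i j hij
      exact (pairing_injRep j (by simp)).trans (Pi.single_eq_of_ne' hij _)
    · intro i
      exact (pairing_injRep i (by simp)).trans (Pi.single_eq_same _ _)
  exact independent.span_eq_top_of_card_eq_finrank' (Module.finrank_fintype_fun_eq_card ℚ).symm

end QuivRep

section GammaRoot

variable {V A : Type} [Fintype V] [Fintype A] {t h : A → V}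

-- The dimension vectors `I_j` of the injectives span, and `⟨γ_i, I_j⟩ = γ_i j = I_j i`.
theorem Acyclic.eulerForm_gammaRoot (hQ : Acyclic t h) (i : V) (y : V → ℚ) :
    eulerForm t h (natQ (gammaRoot t h i)) y = y i := by
  suffices eulerBilin t h (natQ (gammaRoot t h i)) = LinearMap.proj i from
    LinearMap.congr_fun this y
  refine LinearMap.ext_on_range (QuivRep.span_dimVec_injRep hQ) fun j => ?_
  refine (QuivRep.pairing_injRep j (by simp)).trans ?_
  rw [natQ, QuivRep.gammaRoot_eq_dimVec_injRep]
  rfl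

theorem Acyclic.eq_zero_of_eulerForm_eq_zero (hQ : Acyclic t h) {x : V → ℚ}
    (hx : ∀ y, eulerForm t h x y = 0) : x = 0 := by
  funext j
  exact (QuivRep.pairing_injRep (K := ℚ) (hQ := hQ) (S := ∅) j (by simp)).symm.trans (hx _)

end GammaRoot

section Specialization

open TensorProduct Polynomial

variable {K : Type} [Field K] {W W' : Type} [AddCommGroup W] [Module K W] [AddCommGroup W']
  [Module K W'] {P : Type} [AddCommGroup P] [Module K[X] P]

/-- The specialization `X = c` of a vector with polynomial coordinates, where `K[X] ⊗ W` is the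
coordinate-free form of `K[X] ^ dim W`. -/
def specialize (W : Type) [AddCommGroup W] [Module K W] (c : K) : K[X] ⊗[K] W →ₗ[K] W :=
  TensorProduct.lid K W ∘ₗ LinearMap.rTensor W (leval c)

theorem specialize_tmul (c : K) (p : K[X]) (w : W) : specialize W c (p ⊗ₜ w) = p.eval c • w := by
  simp [specialize, leval_apply]

theorem specialize_smul (c : K) (p : K[X]) (v : K[X] ⊗[K] W) :
    specialize W c (p • v) = p.eval c • specialize W c v := by
  induction v with
  | zero => simp
  | add u v hu hv => rw [smul_add, map_add, map_add, smul_add, hu, hv]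
  | tmul q w => rw [smul_tmul', specialize_tmul, specialize_tmul, smul_eq_mul, eval_mul, mul_smul]

theorem specialize_baseChange (c : K) (f : W →ₗ[K] W') (v : K[X] ⊗[K] W) :
    specialize W' c (f.baseChange K[X] v) = f (specialize W c v) := by
  induction v with
  | zero => simp
  | add u v hu hv => simp only [map_add, hu, hv]
  | tmul q w => rw [LinearMap.baseChange_tmul, specialize_tmul, specialize_tmul, map_smul]

theorem tensorProduct_tmul (p q : K[X]) (f : W →ₗ[K] W') (w : W) :
    LinearMap.tensorProduct K K[X] W W' (p ⊗ₜ f) (q ⊗ₜ w) = (p * q) ⊗ₜ f w := by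
  simp [LinearMap.tensorProduct, smul_tmul']

theorem specialize_tensorProduct (c : K) (φ : K[X] ⊗[K] (W →ₗ[K] W')) (v : K[X] ⊗[K] W) :
    specialize W' c (LinearMap.tensorProduct K K[X] W W' φ v) =
      specialize (W →ₗ[K] W') c φ (specialize W c v) := by
  induction φ with
  | zero => simp
  | add φ₁ φ₂ h₁ h₂ => simp only [map_add, LinearMap.add_apply, h₁, h₂]
  | tmul p f =>
    induction v with
    | zero => simp
    | add v₁ v₂ h₁ h₂ => simp only [map_add, h₁, h₂]
    | tmul q w =>
      rw [tensorProduct_tmul, specialize_tmul, specialize_tmul, specialize_tmul, eval_mul, mul_smul,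
        LinearMap.smul_apply, map_smul]

/-- The subspace of all specializations at `X = c` of the vectors of `N`. -/
def specializedSubmodule (c : K) (N : Submodule K[X] (K[X] ⊗[K] W)) : Submodule K W :=
  (N.restrictScalars K).map (specialize W c)

theorem specialize_mem_specializedSubmodule {c : K} {N : Submodule K[X] (K[X] ⊗[K] W)}
    {v : K[X] ⊗[K] W} (hv : v ∈ N) : specialize W c v ∈ specializedSubmodule c N :=
  Submodule.mem_map_of_mem hv

/-- The linear pencil `D + X • C`. -/
def pencil (D C : W →ₗ[K] W') : K[X] ⊗[K] W →ₗ[K[X]] K[X] ⊗[K] W' :=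
  D.baseChange K[X] + (X : K[X]) • C.baseChange K[X]

theorem specialize_pencil (D C : W →ₗ[K] W') (c : K) (v : K[X] ⊗[K] W) :
    specialize W' c (pencil D C v) = (D + c • C) (specialize W c v) := by
  simp only [pencil, LinearMap.add_apply, LinearMap.smul_apply, map_add, specialize_smul,
    specialize_baseChange, eval_X]

variable [FiniteDimensional K W]

theorem finrank_specializedSubmodule_le (c : K) (N : Submodule K[X] (K[X] ⊗[K] W)) :
    Module.finrank K (specializedSubmodule c N) ≤ Module.finrank K[X] N := by
  have : Module.Free K[X] N := Module.free_of_finite_type_torsion_free' (M := N)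
  let b := Module.finBasis K[X] N
  have spanned : specializedSubmodule c N ≤
      Submodule.span K (Set.range fun k => specialize W c (b k)) := by
    rintro _ ⟨v, hv, rfl⟩
    have expansion : v = ∑ k, b.repr ⟨v, hv⟩ k • (b k : K[X] ⊗[K] W) := by
      have := congrArg N.subtype (b.sum_repr ⟨v, hv⟩)
      rw [map_sum] at this
      exact this.symm
    rw [expansion, map_sum]
    refine Submodule.sum_mem _ fun k _ => ?_
    rw [specialize_smul]
    exact Submodule.smul_mem _ _ (Submodule.subset_span ⟨k, rfl⟩)
  calc Module.finrank K (specializedSubmodule c N)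
      ≤ Module.finrank K (Submodule.span K (Set.range fun k => specialize W c (b k))) :=
        Submodule.finrank_mono spanned
    _ ≤ Module.finrank K[X] N := (finrank_range_le_card _).trans (Fintype.card_fin _).le

/-- The range of a linear map with torsion-free target is projective, so that the kernel is a
direct summand and loses no rank under specialization. -/
theorem finrank_specializedSubmodule_ker [Module.IsTorsionFree K[X] P] (c : K)
    (f : K[X] ⊗[K] W →ₗ[K[X]] P) :
    Module.finrank K (specializedSubmodule c (LinearMap.ker f)) =
      Module.finrank K[X] (LinearMap.ker f) := by
  have : Module.Free K[X] (LinearMap.range f) := Module.free_of_finite_type_torsion_free'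
  obtain ⟨g, hg⟩ := f.rangeRestrict.exists_rightInverse_of_surjective f.range_rangeRestrict
  have section_apply (v : K[X] ⊗[K] W) : f (g (f.rangeRestrict v)) = f v :=
    congrArg Subtype.val (LinearMap.congr_fun hg (f.rangeRestrict v))
  have g_injective : Function.Injective g :=
    Function.LeftInverse.injective (g := f.rangeRestrict) (LinearMap.congr_fun hg)
  have ker_sup_range : specializedSubmodule c (LinearMap.ker f) ⊔
      specializedSubmodule c (LinearMap.range g) = ⊤ := by
    refine eq_top_iff.2 fun w _ => ?_
    let v : K[X] ⊗[K] W := 1 ⊗ₜ w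
    have decomposition :
        w = specialize W c (v - g (f.rangeRestrict v)) +
          specialize W c (g (f.rangeRestrict v)) := by
      simp [v, specialize_tmul]
    rw [decomposition]
    refine Submodule.add_mem_sup (specialize_mem_specializedSubmodule ?_)
      (specialize_mem_specializedSubmodule ⟨_, rfl⟩)
    rw [LinearMap.mem_ker, map_sub, section_apply, sub_self]
  have dim_le := Submodule.finrank_add_le_finrank_add_finrank
    (specializedSubmodule c (LinearMap.ker f)) (specializedSubmodule c (LinearMap.range g))
  have range_le := finrank_specializedSubmodule_le c (LinearMap.range g)
  have rankNullity := (LinearMap.ker f).finrank_quotient_add_finrank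
  rw [ker_sup_range, finrank_top] at dim_le
  rw [LinearMap.finrank_range_of_inj g_injective] at range_le
  rw [f.quotKerEquivRange.finrank_eq, Module.finrank_baseChange] at rankNullity
  exact le_antisymm (finrank_specializedSubmodule_le c _) (by lia)

theorem injective_of_specialize_injective [Module.IsTorsionFree K[X] P] (c : K)
    (f : K[X] ⊗[K] W →ₗ[K[X]] P) (hf : ∀ v, f v = 0 → specialize W c v = 0) :
    Function.Injective f := by
  have : Module.Free K[X] (LinearMap.ker f) :=
    Module.free_of_finite_type_torsion_free' (M := LinearMap.ker f)
  have specialized_eq_bot : specializedSubmodule c (LinearMap.ker f) = ⊥ := by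
    rw [eq_bot_iff]
    rintro _ ⟨v, hv, rfl⟩
    exact hf v hv
  rw [← LinearMap.ker_eq_bot, ← Submodule.finrank_eq_zero (R := K[X]),
    ← finrank_specializedSubmodule_ker c f, specialized_eq_bot, finrank_bot]

/-- The saturation of `N`: the vectors some nonzero multiple of which lies in `N`. It is the
kernel of a linear map with torsion-free target. -/
def saturation {M : Type} [AddCommGroup M] [Module K[X] M] (N : Submodule K[X] M) :
    Submodule K[X] M :=
  LinearMap.ker ((Submodule.torsion K[X] (M ⧸ N)).mkQ ∘ₗ N.mkQ)

theorem mem_saturation_iff {M : Type} [AddCommGroup M] [Module K[X] M] {N : Submodule K[X] M}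
    {v : M} : v ∈ saturation N ↔ ∃ q : K[X], q ≠ 0 ∧ q • v ∈ N := by
  simp only [saturation, LinearMap.mem_ker, LinearMap.comp_apply, Submodule.mkQ_apply,
    Submodule.Quotient.mk_eq_zero, Submodule.mem_torsion_iff, Subtype.exists,
    mem_nonZeroDivisors_iff_ne_zero, exists_prop, ← Submodule.Quotient.mk_smul,
    Submonoid.mk_smul]

theorem finrank_saturation (N : Submodule K[X] (K[X] ⊗[K] W)) :
    Module.finrank K[X] (saturation N) = Module.finrank K[X] N := by
  let T := Submodule.torsion K[X] ((K[X] ⊗[K] W) ⧸ N)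
  have h₁ := N.finrank_quotient_add_finrank
  have h₂ := (saturation N).finrank_quotient_add_finrank
  have h₃ : Module.finrank K[X] (((K[X] ⊗[K] W) ⧸ N) ⧸ T) = _ :=
    finrank_quotient_eq_of_le_torsion le_rfl
  have h₄ := (LinearMap.quotKerEquivOfSurjective (T.mkQ ∘ₗ N.mkQ)
    (T.mkQ_surjective.comp N.mkQ_surjective)).finrank_eq
  change Module.finrank K[X] ((K[X] ⊗[K] W) ⧸ saturation N) = _ at h₄
  lia

theorem map_mem_saturation {M M' : Type} [AddCommGroup M] [Module K[X] M] [AddCommGroup M']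
    [Module K[X] M'] {N : Submodule K[X] M} {N' : Submodule K[X] M'} (f : M →ₗ[K[X]] M')
    (hf : ∀ v ∈ N, f v ∈ N') {v : M} (hv : v ∈ saturation N) : f v ∈ saturation N' := by
  obtain ⟨q, hq, hqv⟩ := mem_saturation_iff.1 hv
  exact mem_saturation_iff.2 ⟨q, hq, by rw [← map_smul]; exact hf _ hqv⟩

theorem finrank_specializedSubmodule_saturation (c : K) (N : Submodule K[X] (K[X] ⊗[K] W)) :
    Module.finrank K (specializedSubmodule c (saturation N)) = Module.finrank K[X] N :=
  (finrank_specializedSubmodule_ker c _).trans (finrank_saturation N)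

/-- A kernel vector of a surjective linear map deforms to a kernel vector of the pencil, since the
kernel of the pencil specializes onto the kernel at `X = 0` by a dimension count. -/
theorem exists_pencil_eq_zero_of_surjective [FiniteDimensional K W'] {D : W →ₗ[K] W'}
    (hD : Function.Surjective D) (C : W →ₗ[K] W') {w : W} (hw : D w = 0) :
    ∃ v, pencil D C v = 0 ∧ specialize W 0 v = w := by
  have specialized_le : specializedSubmodule 0 (LinearMap.ker (pencil D C)) ≤ LinearMap.ker D := by
    rintro _ ⟨v, hv, rfl⟩
    have hv : pencil D C v = 0 := hv
    simpa [hv] using (specialize_pencil D C 0 v).symm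
  have rank_le : Module.finrank K (LinearMap.ker D) ≤
      Module.finrank K (specializedSubmodule 0 (LinearMap.ker (pencil D C))) := by
    have h₁ := (LinearMap.ker (pencil D C)).finrank_quotient_add_finrank
    have h₂ := Submodule.finrank_le (LinearMap.range (pencil D C))
    have h₃ := D.finrank_range_add_finrank_ker
    rw [(pencil D C).quotKerEquivRange.finrank_eq, Module.finrank_baseChange] at h₁
    rw [Module.finrank_baseChange] at h₂
    rw [LinearMap.range_eq_top.2 hD, finrank_top] at h₃
    rw [finrank_specializedSubmodule_ker]
    lia
  have hw' : w ∈ specializedSubmodule 0 (LinearMap.ker (pencil D C)) := by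
    rwa [Submodule.eq_of_le_of_finrank_le specialized_le rank_le]
  exact hw'

end Specialization

section GenericEmbedding

open TensorProduct Polynomial

variable {K : Type} [Field K] {V A : Type} {t h : A → V} {B M : QuivRep K V A t h}

/-- The derivative of `d^B_Y` when the arrows of `Y` move away from those of `B` in the direction
`C`. -/
def QuivRep.dmapDeviation (C : ∀ a, B.sp (t a) →ₗ[K] B.sp (h a)) :
    (∀ i, B.sp i →ₗ[K] B.sp i) →ₗ[K] (∀ a, B.sp (t a) →ₗ[K] B.sp (h a)) :=
  - LinearMap.pi fun a => LinearMap.llcomp K _ _ _ (C a) ∘ₗ LinearMap.proj (t a)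

theorem tensorProduct_pencil_dmap (C : ∀ a, B.sp (t a) →ₗ[K] B.sp (h a)) (a : A)
    (φ : K[X] ⊗[K] (∀ i, B.sp i →ₗ[K] B.sp i)) (v : K[X] ⊗[K] B.sp (t a)) :
    LinearMap.tensorProduct K K[X] _ _ ((LinearMap.proj a).baseChange K[X]
        (pencil (QuivRep.dmap B B) (QuivRep.dmapDeviation C) φ)) v =
      LinearMap.tensorProduct K K[X] _ _ ((LinearMap.proj (h a)).baseChange K[X] φ)
          ((B.map a).baseChange K[X] v) -
        pencil (B.map a) (C a)
          (LinearMap.tensorProduct K K[X] _ _ ((LinearMap.proj (t a)).baseChange K[X] φ) v) := by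
  induction φ with
  | zero => simp
  | add φ₁ φ₂ h₁ h₂ =>
    simp only [map_add, LinearMap.add_apply, h₁, h₂]
    abel
  | tmul p f =>
    induction v with
    | zero => simp
    | add v₁ v₂ h₁ h₂ =>
      simp only [map_add, h₁, h₂]
      abel
    | tmul q w =>
      simp only [pencil, QuivRep.dmap, QuivRep.dmapDeviation, LinearMap.baseChange_neg,
        LinearMap.add_apply, LinearMap.baseChange_tmul, LinearMap.coe_mk, AddHom.coe_mk,
        LinearMap.smul_apply, LinearMap.neg_apply, smul_neg, smul_tmul', smul_eq_mul, map_add,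
        LinearMap.coe_proj, Function.eval, tmul_sub, map_neg, LinearMap.pi_apply,
        LinearMap.coe_comp, Function.comp_apply, map_sub, LinearMap.sub_apply, tensorProduct_tmul,
        mul_assoc, LinearMap.llcomp_apply]
      abel

theorem exists_deformed_identity [Finite V] [Finite A] (hB : QuivRep.ExtVanishes B B)
    (C : ∀ a, B.sp (t a) →ₗ[K] B.sp (h a)) :
    ∃ Φ : ∀ i, K[X] ⊗[K] B.sp i →ₗ[K[X]] K[X] ⊗[K] B.sp i,
      (∀ i v, specialize _ 0 (Φ i v) = specialize _ 0 v) ∧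
      ∀ a v, Φ (h a) ((B.map a).baseChange K[X] v) = pencil (B.map a) (C a) (Φ (t a) v) := by
  obtain ⟨φ, hφ, hφ₀⟩ := exists_pencil_eq_zero_of_surjective
    (QuivRep.extVanishes_iff_surjective_dmap.1 hB) (QuivRep.dmapDeviation C)
    (w := fun _ => LinearMap.id) (funext fun _ => sub_self _)
  refine ⟨fun i => LinearMap.tensorProduct K K[X] _ _ ((LinearMap.proj i).baseChange K[X] φ),
    fun i v => ?_, fun a v => ?_⟩
  · rw [specialize_tensorProduct, specialize_baseChange, hφ₀]
    rfl
  · rw [← sub_eq_zero, ← tensorProduct_pencil_dmap, hφ, map_zero, map_zero, LinearMap.zero_apply]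

/-- Over the polynomial ring, a deformed identity embeds `U` into the line `B + X • C`; the
saturation of its image keeps its rank under specialization, in particular at `X = 1`. -/
theorem exists_sub_add [Finite V] [Finite A] (hB : QuivRep.ExtVanishes B B) (U : QuivRep.Sub B)
    (C : ∀ a, B.sp (t a) →ₗ[K] B.sp (h a)) :
    ∃ N : ∀ i, Submodule K (B.sp i), (∀ a, ∀ x ∈ N (t a), B.map a x + C a x ∈ N (h a)) ∧
      ∀ i, Module.finrank K (N i) = U.dimVec i := by
  obtain ⟨Φ, hΦ₀, hΦ⟩ := exists_deformed_identity hB C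
  have Φ_injective (i : V) : Function.Injective (Φ i) :=
    injective_of_specialize_injective 0 (Φ i) fun v hv => by rw [← hΦ₀, hv, map_zero]
  let ι (i : V) := Φ i ∘ₗ (U.sub i).subtype.baseChange K[X]
  have ι_injective (i : V) : Function.Injective (ι i) := (Φ_injective i).comp
    (Module.Flat.lTensor_preserves_injective_linearMap _ (U.sub i).injective_subtype)
  have pencil_ι (a : A) (v : K[X] ⊗[K] U.sub (t a)) : pencil (B.map a) (C a) (ι (t a) v) =
      ι (h a) ((U.rep.map a).baseChange K[X] v) := by
    change pencil _ _ (Φ _ _) = Φ _ _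
    rw [← hΦ]
    congr 1
    calc (B.map a).baseChange K[X] ((U.sub (t a)).subtype.baseChange K[X] v)
        = (B.map a ∘ₗ (U.sub (t a)).subtype).baseChange K[X] v := by
          rw [LinearMap.baseChange_comp, LinearMap.comp_apply]
      _ = (U.sub (h a)).subtype.baseChange K[X] ((U.rep.map a).baseChange K[X] v) :=
          LinearMap.congr_fun (LinearMap.baseChange_comp (U.rep.map a) (U.sub (h a)).subtype) v
  refine ⟨fun i => specializedSubmodule 1 (saturation (LinearMap.range (ι i))), ?_, fun i => ?_⟩
  · rintro a _ ⟨v, hv, rfl⟩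
    have image_mem : pencil (B.map a) (C a) v ∈ saturation (LinearMap.range (ι (h a))) := by
      refine map_mem_saturation _ ?_ hv
      rintro _ ⟨u, rfl⟩
      exact ⟨_, (pencil_ι a u).symm⟩
    have := specialize_mem_specializedSubmodule (c := 1) image_mem
    rwa [specialize_pencil, one_smul] at this
  · rw [finrank_specializedSubmodule_saturation, LinearMap.finrank_range_of_inj (ι_injective i),
      Module.finrank_baseChange]
    rfl

theorem QuivRep.ExtVanishes.embeds [Finite V] [Finite A] (hB : QuivRep.ExtVanishes B B)
    (U : QuivRep.Sub B) : Embeds K t h U.dimVec B.dimVec := by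
  intro M hM
  let e (i : V) : B.sp i ≃ₗ[K] M.sp i := LinearEquiv.ofFinrankEq _ _ (congrFun hM i).symm
  obtain ⟨N, hN, hNU⟩ := exists_sub_add hB U
    fun a => (e (h a)).symm.toLinearMap ∘ₗ M.map a ∘ₗ (e (t a)).toLinearMap - B.map a
  refine ⟨⟨fun i => (N i).map (e i).toLinearMap, ?_⟩, funext fun i => ?_⟩
  · rintro a _ ⟨x, hx, rfl⟩
    exact ⟨_, hN a x hx, by simp⟩
  · exact ((e i).finrank_map_eq (N i)).trans (hNU i)

end GenericEmbedding

namespace QuivRep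

section Schur

variable {K : Type} [Field K] {V A : Type} {t h : A → V} {B I : QuivRep K V A t h}

theorem IsSchur.exists_eq_smul (hB : B.IsSchur) (f : RepHom B B) :
    ∃ c : K, ∀ i x, f.app i x = c • x := by
  obtain ⟨v, -, hv⟩ := finrank_eq_one_iff'.1 hB
  obtain ⟨c₁, hc₁⟩ := hv ⟨(RepHom.idHom B).app, (RepHom.idHom B).comm⟩
  obtain ⟨c, hc⟩ := hv ⟨f.app, f.comm⟩
  have id_eq (i) (x : B.sp i) : c₁ • v.1 i x = x :=
    LinearMap.congr_fun (congrFun (congrArg Subtype.val hc₁) i) x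
  have f_eq (i) (x : B.sp i) : c • v.1 i x = f.app i x :=
    LinearMap.congr_fun (congrFun (congrArg Subtype.val hc) i) x
  refine ⟨c * c₁⁻¹, fun i x => ?_⟩
  rcases eq_or_ne c₁ 0 with rfl | hc₁
  · rw [← id_eq i x, zero_smul, map_zero, smul_zero]
  · rw [← f_eq, mul_smul, (eq_inv_smul_iff₀ hc₁).2 (id_eq i x)]

theorem IsSchur.app_eq_self (hB : B.IsSchur) (f : RepHom B B) {i : V} {x : B.sp i} (hx : x ≠ 0)
    (hfx : f.app i x = x) (j : V) (y : B.sp j) : f.app j y = y := by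
  obtain ⟨c, hc⟩ := hB.exists_eq_smul f
  have : c = 1 := smul_left_injective K hx (by simp only [← hc, hfx, one_smul])
  rw [hc, this, one_smul]

theorem IsSchur.isNonzero [Finite V] (hB : B.IsSchur) : B.IsNonzero := by
  by_contra hzero
  have zero_of_mem (i) (x : B.sp i) : x = 0 := not_not.1 fun hx => hzero ⟨i, x, hx⟩
  have : homDim B B = 0 := homVanishes_iff_homDim.1 fun _ _ _ => zero_of_mem _ _
  rw [hB] at this
  exact one_ne_zero this

/-- `I` is relatively injective for the representations supported outside `S`. -/
def IsInjectiveOutside (S : Finset V) (I : QuivRep K V A t h) : Prop :=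
  ∀ W, VanishesOn S W → ExtVanishes W I

theorem IsInjectiveOutside.of_surjective {S : Finset V} (hI : IsInjectiveOutside S I)
    (f : RepHom I B) (hf : ∀ i, Function.Surjective (f.app i)) : IsInjectiveOutside S B :=
  fun W hW => (ShortExact.ofSurjective f hf).extVanishes_right_quotient (hI W hW)

/-- The image of `I` is again relatively injective, so it is a direct summand of the indecomposable
representation `B`. -/
theorem IsInjectiveOutside.surjective_of_isSchur {S : Finset V} (hI : IsInjectiveOutside S I)
    (hB : B.IsSchur) (hBS : VanishesOn S B) (f : RepHom I B) (hf : ¬ f.IsZero) (i : V) :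
    Function.Surjective (f.app i) := by
  have range_injective : IsInjectiveOutside S f.range.rep :=
    hI.of_surjective f.rangeRestrict fun i => (f.app i).surjective_rangeRestrict
  let s := f.range.shortExact
  obtain ⟨r, hr⟩ := s.exists_hom_extend (range_injective _ (s.vanishesOn_quotient hBS)) (.idHom _)
  simp only [RepHom.IsZero, not_forall] at hf
  obtain ⟨j, y, hy⟩ := hf
  have fixed : (r.comp s.ι).app j (f.app j y) = f.app j y :=
    congrArg (s.ι.app j) (hr j ⟨f.app j y, y, rfl⟩)
  intro x
  have hx := hB.app_eq_self (r.comp s.ι) hy fixed i x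
  obtain ⟨z, hz⟩ := (r.app i x).2
  exact ⟨z, hz.trans hx⟩

theorem exists_ne_zero_of_isNonzero [Finite V] (hQ : Acyclic t h) (hB : B.IsNonzero) :
    ∃ j, ∃ x : B.sp j, x ≠ 0 ∧ ∀ a, t a = j → ∀ z : B.sp (h a), z = 0 := by
  obtain ⟨j, ⟨x, hx⟩, hmin⟩ := hQ.wellFounded_head_tail.has_min {i | ∃ x : B.sp i, x ≠ 0} hB
  exact ⟨j, x, hx, fun a ha z => not_not.1 fun hz => hmin (h a) ⟨z, hz⟩ ⟨a, ha, rfl⟩⟩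

theorem injective_of_injRep [Finite V] [Finite A] {hQ : Acyclic t h} {S : Finset V} {j : V}
    (hj : j ∉ S) (f : RepHom (injRep K hQ S j) B) (hf : ¬ ∀ x, f.app j x = 0) (i : V) :
    Function.Injective (f.app i) := by
  push Not at hf
  obtain ⟨y, hy⟩ := hf
  have hy₀ : y ≠ 0 := fun hzero => hy (by rw [hzero, map_zero])
  have ker_eq_zero (z : f.ker.rep.sp j) : z = 0 := by
    obtain ⟨c, hc⟩ := exists_smul_eq_of_finrank_eq_one (dimVec_injRep_self (K := K) hj) hy₀ z.1
    have : c • f.app j y = 0 := by rw [← map_smul, hc]; exact z.2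
    rw [(smul_eq_zero.1 this).resolve_right hy, zero_smul] at hc
    exact Subtype.ext hc.symm
  rw [injective_iff_map_eq_zero]
  intro x hx
  exact homVanishes_injRep ker_eq_zero f.ker.shortExact.ι i ⟨x, hx⟩

/-- The one-dimensional subrepresentation spanned by a vector `x` at a vertex `j` all of whose
outgoing arrows end in zero spaces. -/
def spanSingle [DecidableEq V] (j : V) (x : B.sp j)
    (hj : ∀ a, t a = j → ∀ z : B.sp (h a), z = 0) : Sub B where
  sub i := Submodule.span K {Pi.single (M := B.sp) j x i}
  le a y hy := by
    by_cases ha : t a = j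
    · rw [hj a ha (B.map a y)]
      exact Submodule.zero_mem _
    · rw [Pi.single_eq_of_ne ha, Submodule.span_zero_singleton, Submodule.mem_bot] at hy
      rw [hy, map_zero]
      exact Submodule.zero_mem _

theorem injective_comp_spanSingle [DecidableEq V] {j : V} {x : B.sp j}
    {hj : ∀ a, t a = j → ∀ z : B.sp (h a), z = 0} (f : RepHom B I) (hf : f.app j x ≠ 0) (i : V) :
    Function.Injective (((spanSingle j x hj).shortExact.ι.comp f).app i) := by
  rw [injective_iff_map_eq_zero]
  rintro ⟨y, hy⟩ (hfy : f.app i y = 0)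
  obtain ⟨c, rfl⟩ := Submodule.mem_span_singleton.1 hy
  refine Subtype.ext (?_ : c • Pi.single (M := B.sp) j x i = 0)
  by_cases hij : i = j
  · subst hij
    rw [Pi.single_eq_same, map_smul] at hfy
    rw [(smul_eq_zero.1 hfy).resolve_right hf, zero_smul]
  · rw [Pi.single_eq_of_ne hij, smul_zero]

/-- An injective hull of the simple subrepresentation at a sink of the support of `B` is a direct
summand of `B`, hence all of `B`. -/
theorem IsInjectiveOutside.exists_mutual_injections [Finite V] [Finite A] (hQ : Acyclic t h)
    {S : Finset V} (hI : IsInjectiveOutside S B) (hB : B.IsSchur) (hBS : VanishesOn S B) :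
    ∃ j, j ∉ S ∧ (∃ g : RepHom B (injRep K hQ S j), ∀ i, Function.Injective (g.app i)) ∧
      ∃ Φ : RepHom (injRep K hQ S j) B, ∀ i, Function.Injective (Φ.app i) := by
  classical
  obtain ⟨j, x, hx, hsink⟩ := exists_ne_zero_of_isNonzero hQ hB.isNonzero
  have hj : j ∉ S := fun hj => hx (hBS j hj x)
  obtain ⟨g, hg⟩ := exists_hom_injRep_ne_zero (hQ := hQ) hj hBS hx
  let T := spanSingle j x hsink
  let s := ShortExact.ofInjective (T.shortExact.ι.comp g) (injective_comp_spanSingle g hg)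
  obtain ⟨Φ, hΦ⟩ := s.exists_hom_extend
    (hI _ (s.vanishesOn_quotient (vanishesOn_injRep hQ S j))) T.shortExact.ι
  have x_mem : x ∈ T.sub j :=
    Submodule.mem_span_singleton.2 ⟨1, by rw [one_smul, Pi.single_eq_same]⟩
  have fixed : (g.comp Φ).app j x = x := hΦ j ⟨x, x_mem⟩
  refine ⟨j, hj, ⟨g, fun i => ?_⟩, Φ, injective_of_injRep hj Φ fun hzero => hx ?_⟩
  · exact Function.LeftInverse.injective (hB.app_eq_self (g.comp Φ) hx fixed i)
  · exact fixed.symm.trans (hzero _)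

end Schur

section Extension

variable {K : Type} [Field K] {V A : Type} {t h : A → V} {B M : QuivRep K V A t h}

/-- The extension of `M` by `B` with cocycle `ψ`. -/
def extension (ψ : ∀ a, M.sp (t a) →ₗ[K] B.sp (h a)) : QuivRep K V A t h where
  sp i := B.sp i × M.sp i
  map a := .prod (B.map a ∘ₗ .fst K _ _ + ψ a ∘ₗ .snd K _ _) (M.map a ∘ₗ .snd K _ _)

/-- The exact sequence `0 → B → E → M → 0` of the extension `E` with cocycle `ψ`. -/
def extensionShortExact (ψ : ∀ a, M.sp (t a) →ₗ[K] B.sp (h a)) :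
    ShortExact B (extension ψ) M where
  ι := .ofApp (fun i => .inl K (B.sp i) (M.sp i)) fun a x =>
    Prod.ext (show B.map a x = B.map a x + ψ a 0 by rw [map_zero, add_zero])
      (map_zero (M.map a)).symm
  π := .ofApp (fun i => .snd K (B.sp i) (M.sp i)) fun _ _ => rfl
  injective _ := LinearMap.inl_injective
  surjective _ := LinearMap.snd_surjective
  exact _ := .inl_snd

/-- The linear splitting `M(i) → E(i)` of the extension `E` with cocycle `ψ`, which is not a
morphism of representations. -/
def extensionSplitting (ψ : ∀ a, M.sp (t a) →ₗ[K] B.sp (h a)) (i : V) :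
    M.sp i →ₗ[K] (extension ψ).sp i :=
  .inr K (B.sp i) (M.sp i)

theorem map_extensionSplitting (ψ : ∀ a, M.sp (t a) →ₗ[K] B.sp (h a)) (a : A) (x : M.sp (t a)) :
    (extension ψ).map a (extensionSplitting ψ (t a) x) =
      (extensionShortExact ψ).ι.app (h a) (ψ a x) + extensionSplitting ψ (h a) (M.map a x) :=
  Prod.ext (show B.map a 0 + ψ a x = ψ a x + 0 by rw [map_zero, zero_add, add_zero])
    (zero_add (M.map a x)).symm

/-- A morphism `f : E → B` restricts to a scalar `c` on `B`. If `c ≠ 0` then `c⁻¹ f` is a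
retraction of the extension; if `c = 0` then `f` factors through `M`. -/
theorem homVanishes_extension (hB : B.IsSchur) (hMB : HomVanishes M B)
    {ψ : ∀ a, M.sp (t a) →ₗ[K] B.sp (h a)}
    (hψ : ¬ ∃ φ : ∀ i, M.sp i →ₗ[K] B.sp i,
      ∀ a x, φ (h a) (M.map a x) - B.map a (φ (t a) x) = ψ a x) :
    HomVanishes (extension ψ) B := by
  intro f i x
  let s := extensionShortExact ψ
  obtain ⟨c, hc⟩ := hB.exists_eq_smul (s.ι.comp f)
  replace hc (i) (x : B.sp i) : f.app i (s.ι.app i x) = c • x := hc i x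
  have hc₀ : c = 0 := by
    by_contra hc₀
    let φ i : M.sp i →ₗ[K] B.sp i := f.app i ∘ₗ extensionSplitting ψ i
    have defect (a x) : φ (h a) (M.map a x) - B.map a (φ (t a) x) = -(c • ψ a x) := by
      have : f.app (h a) ((extension ψ).map a (extensionSplitting ψ (t a) x)) =
        B.map a (φ (t a) x) := f.app_map a _
      rw [← this, map_extensionSplitting, map_add, hc]
      exact sub_add_cancel_right _ _
    refine hψ ⟨fun i => -c⁻¹ • φ i, fun a x => ?_⟩
    simp only [LinearMap.smul_apply, map_smul]
    rw [← smul_sub, defect, smul_neg, neg_smul, neg_neg, inv_smul_smul₀ hc₀]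
  obtain ⟨f', hf'⟩ := s.exists_hom_desc f fun i x => (hc i x).trans (by rw [hc₀, zero_smul])
  rw [← hf', hMB]

end Extension

section Perp

variable {K : Type} [Field K] {V A : Type} {t h : A → V} {B M N : QuivRep K V A t h}
  {S : Finset V}

/-- `W` belongs to the left perpendicular category of `B` in the category of representations
supported outside `S`: `Hom(W,B) = 0` and `Ext^1(W,B) = 0`. -/
structure LeftPerp (B : QuivRep K V A t h) (S : Finset V) (W : QuivRep K V A t h) : Prop where
  vanishesOn : VanishesOn S W
  hom : HomVanishes W B
  ext : ExtVanishes W B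

/-- `M` is injective relative to the left perpendicular category of `B`, without necessarily
belonging to it. -/
def PerpInjective (B : QuivRep K V A t h) (S : Finset V) (M : QuivRep K V A t h) : Prop :=
  ∀ W, LeftPerp B S W → ExtVanishes W M

variable [Fintype V] [Fintype A]

/-- The weights supported outside `S` and orthogonal to `B`; the dimension vectors of the left
perpendicular category of `B` lie in this space. -/
def perpSpace (B : QuivRep K V A t h) (S : Finset V) : Submodule ℚ (V → ℚ) where
  carrier := {x | (∀ i ∈ S, x i = 0) ∧ B.pairing x = 0}
  zero_mem' := ⟨fun _ _ => rfl, map_zero _⟩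
  add_mem' hx hy := ⟨fun i hi => by rw [Pi.add_apply, hx.1 i hi, hy.1 i hi, add_zero],
    by rw [map_add, hx.2, hy.2, add_zero]⟩
  smul_mem' c x hx := ⟨fun i hi => by rw [Pi.smul_apply, hx.1 i hi, smul_zero],
    by rw [map_smul, hx.2, smul_zero]⟩

/-- `α` is a nonnegative weight supported outside `S` for which `B` is semistable. -/
structure IsNonnegWeight (B : QuivRep K V A t h) (S : Finset V) (α : V → ℚ) : Prop where
  nonneg : ∀ i, 0 ≤ α i
  mem_perpSpace : α ∈ perpSpace B S
  pairing_sub_nonpos : ∀ U : Sub B, U.rep.pairing α ≤ 0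

/-- Every quotient of `M` pairs nonnegatively with the nonnegative semistable weights of `B`. -/
def QuotientsPairNonneg (B : QuivRep K V A t h) (S : Finset V) (M : QuivRep K V A t h) : Prop :=
  ∀ (Z : QuivRep K V A t h) (g : RepHom M Z), (∀ i, Function.Surjective (g.app i)) →
    ∀ α, IsNonnegWeight B S α → 0 ≤ Z.pairing α

theorem QuotientsPairNonneg.of_surjective (hM : QuotientsPairNonneg B S M) (f : RepHom M N)
    (hf : ∀ i, Function.Surjective (f.app i)) : QuotientsPairNonneg B S N :=
  fun Z g hg => hM Z (f.comp g) fun i => (hg i).comp (hf i)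

theorem QuotientsPairNonneg.pairing_nonneg (hM : QuotientsPairNonneg B S M) {α : V → ℚ}
    (hα : IsNonnegWeight B S α) : 0 ≤ M.pairing α :=
  hM M (.idHom M) (fun _ => Function.surjective_id) α hα

/-- A quotient `Z` of the middle term is an extension of a quotient of `M` by the image of `B` in
`Z`, and the latter pairs nonnegatively with `α` because the kernel of `B → Z` pairs
nonpositively. -/
theorem QuotientsPairNonneg.middle (s : ShortExact B N M) (hM : QuotientsPairNonneg B S M) :
    QuotientsPairNonneg B S N := by
  intro Z g hg α hα
  let f := s.ι.comp g
  let u := f.range.shortExact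
  have image_nonneg : 0 ≤ f.range.rep.pairing α := by
    have kernel_nonpos := hα.pairing_sub_nonpos f.rangeRestrict.ker
    have additivity := f.kerRangeShortExact.pairing_eq α
    rw [hα.mem_perpSpace.2] at additivity
    linarith
  obtain ⟨q, hq⟩ := s.exists_hom_desc (g.comp u.π) fun i x =>
    (u.exact i _).2 ⟨⟨f.app i x, x, rfl⟩, rfl⟩
  have cokernel_nonneg : 0 ≤ f.range.quotient.pairing α := by
    refine hM _ q (fun i z => ?_) α hα
    obtain ⟨y, rfl⟩ := u.surjective i z
    obtain ⟨x, rfl⟩ := hg i y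
    exact ⟨s.π.app i x, hq i x⟩
  rw [u.pairing_eq]
  exact add_nonneg image_nonneg cokernel_nonneg

theorem quotientsPairNonneg_injRep {hQ : Acyclic t h} {S' : Finset V}
    (hS' : ∀ α ∈ perpSpace B S, ∀ i ∈ S', α i = 0) (j : V) :
    QuotientsPairNonneg B S (injRep K hQ S' j) :=
  fun _ g hg α hα => pairing_nonneg_of_surjective_outPi hα.nonneg fun i hi =>
    surjective_outPi_of_surjective g hg <|
      surjective_outPi_injRep (fun hi' => hi (hS' α hα.mem_perpSpace i hi')) j

/-- `M` behaves like the injective representation `I_j` as seen from the left perpendicular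
category of `B`. -/
structure IsInjectiveApprox (B : QuivRep K V A t h) (S : Finset V) (j : V)
    (M : QuivRep K V A t h) : Prop where
  vanishesOn : VanishesOn S M
  hom : HomVanishes M B
  perpInjective : PerpInjective B S M
  quotientsPairNonneg : QuotientsPairNonneg B S M
  pairing_eq : ∀ x ∈ perpSpace B S, M.pairing x = x j
  not_homVanishes : ∀ W, LeftPerp B S W → (∃ x : W.sp j, x ≠ 0) → ¬ HomVanishes W M

namespace IsInjectiveApprox

variable {j : V}

theorem extension (hB : B.IsExceptional) (hBS : VanishesOn S B) (hM : IsInjectiveApprox B S j M)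
    {ψ : ∀ a, M.sp (t a) →ₗ[K] B.sp (h a)}
    (hψ : ¬ ∃ φ : ∀ i, M.sp i →ₗ[K] B.sp i,
      ∀ a x, φ (h a) (M.map a x) - B.map a (φ (t a) x) = ψ a x) :
    IsInjectiveApprox B S j (extension ψ) where
  vanishesOn := (extensionShortExact ψ).vanishesOn_middle hBS hM.vanishesOn
  hom := homVanishes_extension hB.2 hM.hom hψ
  perpInjective W hW :=
    (extensionShortExact ψ).extVanishes_right_middle hW.ext (hM.perpInjective W hW)
  quotientsPairNonneg := hM.quotientsPairNonneg.middle (extensionShortExact ψ)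
  pairing_eq x hx := by
    rw [(extensionShortExact ψ).pairing_eq, hx.2, zero_add, hM.pairing_eq x hx]
  not_homVanishes W hW hWj hWE := hM.not_homVanishes W hW hWj fun g => by
    obtain ⟨g', hg'⟩ := (extensionShortExact ψ).exists_hom_lift hW.ext g
    intro i x
    rw [← hg', hWE, map_zero]

/-- Each nonsplit extension by `B` lowers `dim Ext^1(M,B)` by one. -/
theorem exists_extVanishes (hB : B.IsExceptional) (hBS : VanishesOn S B)
    (hM : IsInjectiveApprox B S j M) : ∃ M', IsInjectiveApprox B S j M' ∧ ExtVanishes M' B := by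
  induction hn : extDim M B generalizing M with
  | zero => exact ⟨M, hM, extVanishes_iff_extDim.2 hn⟩
  | succ n ih =>
    have nonsplit : ¬ ExtVanishes M B := by rw [extVanishes_iff_extDim]; lia
    obtain ⟨ψ, hψ⟩ := not_forall.1 nonsplit
    have hE := hM.extension hB hBS hψ
    refine ih hE ?_
    have euler := (extensionShortExact ψ).homDim_sub_extDim_left B
    rw [homVanishes_iff_homDim.1 hE.hom, homVanishes_iff_homDim.1 hM.hom, hB.1, hB.2, hn] at euler
    push_cast at euler
    exact_mod_cast show (extDim (QuivRep.extension ψ) B : ℚ) = n by linarith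

theorem injRep {hQ : Acyclic t h} {S' : Finset V} (hSS' : S ⊆ S')
    (hS' : ∀ x ∈ perpSpace B S, ∀ i ∈ S', x i = 0)
    (hperp : ∀ W, LeftPerp B S W → VanishesOn S' W)
    (hB : HomVanishes (injRep K hQ S' j) B) : IsInjectiveApprox B S j (injRep K hQ S' j) where
  vanishesOn i hi := vanishesOn_injRep hQ S' j i (hSS' hi)
  hom := hB
  perpInjective W hW := extVanishes_injRep (hperp W hW) j
  quotientsPairNonneg := quotientsPairNonneg_injRep hS' j
  pairing_eq x hx := pairing_injRep j (hS' x hx)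
  not_homVanishes W hW := by
    rintro ⟨x, hx⟩ hzero
    obtain ⟨f, hf⟩ := exists_hom_injRep_ne_zero (hQ := hQ) (fun hj => hx (hperp W hW j hj x))
      (hperp W hW) hx
    exact hf (hzero f j x)

end IsInjectiveApprox

/-- If `Hom(I_j,B) ≠ 0`, then `B` is the injective representation at some vertex `j₀` and its left
perpendicular category consists of the representations vanishing at `j₀`. -/
theorem exists_isInjectiveApprox_of_hom_ne_zero (hQ : Acyclic t h) (hB : B.IsSchur)
    (hBS : VanishesOn S B) {j : V} (hj : ¬ HomVanishes (injRep K hQ S j) B) :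
    ∃ M, IsInjectiveApprox B S j M ∧ ExtVanishes M B := by
  classical
  obtain ⟨f, hf⟩ := not_forall.1 hj
  have injRep_injective (j) : IsInjectiveOutside S (injRep K hQ S j) :=
    fun W hW => extVanishes_injRep hW j
  have B_injective : IsInjectiveOutside S B := (injRep_injective j).of_surjective f
    ((injRep_injective j).surjective_of_isSchur hB hBS f hf)
  obtain ⟨j₀, hj₀, ⟨g, hg⟩, Φ, hΦ⟩ := B_injective.exists_mutual_injections hQ hB hBS
  have dimVec_eq : B.dimVec = (injRep K hQ S j₀).dimVec := funext fun i =>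
    le_antisymm (LinearMap.finrank_le_finrank_of_injective (hg i))
      (LinearMap.finrank_le_finrank_of_injective (hΦ i))
  have perpSpace_vanishes (x) (hx : x ∈ perpSpace B S) : ∀ i ∈ insert j₀ S, x i = 0 := by
    refine Finset.forall_mem_insert _ _ _ |>.2 ⟨?_, hx.1⟩
    rw [← pairing_injRep (K := K) (hQ := hQ) j₀ hx.1, ← hx.2]
    simp only [pairing, dimVec_eq]
  have perp_vanishes (W) (hW : LeftPerp B S W) : VanishesOn (insert j₀ S) W := by
    refine Finset.forall_mem_insert _ _ _ |>.2 ⟨fun x => ?_, hW.vanishesOn⟩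
    by_contra hx
    obtain ⟨f, hf⟩ := exists_hom_injRep_ne_zero (hQ := hQ) hj₀ hW.vanishesOn hx
    exact hf ((ShortExact.ofInjective Φ hΦ).homVanishes_right_sub hW.hom f j₀ x)
  refine ⟨injRep K hQ (insert j₀ S) j, .injRep (Finset.subset_insert _ _) perpSpace_vanishes
    perp_vanishes ?_, B_injective _ fun i hi => ?_⟩
  · exact (ShortExact.ofInjective g hg).homVanishes_right_sub <| homVanishes_injRep <|
      vanishesOn_injRep hQ _ j j₀ (Finset.mem_insert_self _ _)
  · exact vanishesOn_injRep hQ _ j i (Finset.mem_insert_of_mem hi)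

theorem exists_isInjectiveApprox (hQ : Acyclic t h) (hB : B.IsExceptional)
    (hBS : VanishesOn S B) (j : V) : ∃ M, IsInjectiveApprox B S j M ∧ ExtVanishes M B := by
  by_cases hj : HomVanishes (injRep K hQ S j) B
  · exact IsInjectiveApprox.exists_extVanishes hB hBS <| .injRep (hQ := hQ) subset_rfl
      (fun _ hx => hx.1) (fun _ hW => hW.vanishesOn) hj
  · exact exists_isInjectiveApprox_of_hom_ne_zero hQ hB.2 hBS hj

end Perp

section MorphismLemmas

variable {K : Type} [Field K] {V A : Type} {t h : A → V} {X Y : QuivRep K V A t h}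

theorem not_isZero_idHom (hX : X.IsNonzero) : ¬ (RepHom.idHom X).IsZero := by
  obtain ⟨i, x, hx⟩ := hX
  exact fun hzero => hx (hzero i x)

theorem isNonzero_range {f : RepHom X Y} (hf : ¬ f.IsZero) : f.range.rep.IsNonzero := by
  simp only [RepHom.IsZero, not_forall] at hf
  obtain ⟨i, x, hx⟩ := hf
  exact ⟨i, ⟨f.app i x, x, rfl⟩, fun hzero => hx (congrArg Subtype.val hzero)⟩

theorem homDim_eq_one {g : RepHom X Y} (hg : ¬ g.IsZero)
    (H : ∀ f : RepHom X Y, ∃ c : K, ∀ i x, f.app i x = c • g.app i x) : homDim X Y = 1 := by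
  refine finrank_eq_one_iff'.2 ⟨⟨g.app, g.comm⟩, fun hzero => hg fun i => ?_, fun w => ?_⟩
  · exact LinearMap.congr_fun (congrFun (congrArg Subtype.val hzero) i)
  · obtain ⟨c, hc⟩ := H ⟨w.1, w.2⟩
    exact ⟨c, Subtype.ext (funext fun i => LinearMap.ext fun x => (hc i x).symm)⟩

variable [Fintype V]

theorem totalDim_le_of_injective (f : RepHom X Y) (hf : ∀ i, Function.Injective (f.app i)) :
    X.totalDim ≤ Y.totalDim :=
  (Nat.le_add_right _ _).trans_eq (ShortExact.ofInjective f hf).totalDim_eq.symm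

theorem totalDim_range_lt {f : RepHom X Y} (hf : ¬ ∀ i, Function.Surjective (f.app i)) :
    f.range.rep.totalDim < Y.totalDim := by
  simp only [Function.Surjective, not_forall] at hf
  obtain ⟨i, y, hy⟩ := hf
  have quotient_nonzero : f.range.quotient.IsNonzero :=
    ⟨i, f.range.shortExact.π.app i y, fun hzero => hy ((Submodule.Quotient.mk_eq_zero _).1 hzero)⟩
  have := f.range.shortExact.totalDim_eq
  have := totalDim_pos_iff.2 quotient_nonzero
  lia

end MorphismLemmas

section PerpSimple

variable {K : Type} [Field K] {V A : Type} {t h : A → V} {B N M Q W W' X Y : QuivRep K V A t h}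
  {S : Finset V}

namespace LeftPerp

theorem range (hX : LeftPerp B S X) (hY : LeftPerp B S Y) (f : RepHom X Y) :
    LeftPerp B S f.range.rep where
  vanishesOn := f.range.shortExact.vanishesOn_sub hY.vanishesOn
  hom := f.kerRangeShortExact.homVanishes_left_quotient hX.hom
  ext := f.range.shortExact.extVanishes_left_sub hY.ext

theorem ker (hX : LeftPerp B S X) (hY : LeftPerp B S Y) (f : RepHom X Y) :
    LeftPerp B S f.rangeRestrict.ker.rep where
  vanishesOn := f.kerRangeShortExact.vanishesOn_sub hX.vanishesOn
  hom := f.kerRangeShortExact.homVanishes_left_sub hX.hom (hX.range hY f).ext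
  ext := f.kerRangeShortExact.extVanishes_left_sub hX.ext

theorem quotient (s : ShortExact N M Q) (hN : LeftPerp B S N) (hM : LeftPerp B S M) :
    LeftPerp B S Q where
  vanishesOn := s.vanishesOn_quotient hM.vanishesOn
  hom := s.homVanishes_left_quotient hM.hom
  ext := s.extVanishes_left_quotient hN.hom hM.ext

theorem pairing_eq_zero [Fintype V] [Fintype A] (hW : LeftPerp B S W) :
    B.pairing (natQ W.dimVec) = 0 := by
  rw [pairing_natQ_dimVec, homVanishes_iff_homDim.1 hW.hom, extVanishes_iff_extDim.1 hW.ext,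
    Nat.cast_zero, sub_zero]

end LeftPerp

/-- A simple object of the left perpendicular category of `B`. -/
structure IsPerpSimple (B : QuivRep K V A t h) (S : Finset V) (W : QuivRep K V A t h) : Prop where
  leftPerp : LeftPerp B S W
  isNonzero : W.IsNonzero
  surjective : ∀ X, LeftPerp B S X → ∀ f : RepHom X W, ¬ f.IsZero →
    ∀ i, Function.Surjective (f.app i)

theorem exists_isPerpSimple_injective [Finite V] (hM : LeftPerp B S M) (hM₀ : M.IsNonzero) :
    ∃ W, IsPerpSimple B S W ∧ ∃ f : RepHom W M, ∀ i, Function.Injective (f.app i) := by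
  have := Fintype.ofFinite V
  induction hn : M.totalDim using Nat.strong_induction_on generalizing M with
  | _ n ih =>
    by_cases simple : IsPerpSimple B S M
    · exact ⟨M, simple, .idHom M, fun i => Function.injective_id⟩
    have not_surjective : ¬ ∀ X, LeftPerp B S X → ∀ f : RepHom X M, ¬ f.IsZero →
        ∀ i, Function.Surjective (f.app i) := fun H => simple ⟨hM, hM₀, H⟩
    push Not at not_surjective
    obtain ⟨X, hX, f, hf, i, hi⟩ := not_surjective
    obtain ⟨W, hW, g, hg⟩ := ih _ (hn ▸ totalDim_range_lt fun H => hi (H i)) (hX.range hM f)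
      (isNonzero_range hf) rfl
    exact ⟨W, hW, g.comp f.range.shortExact.ι,
      fun i => (f.range.shortExact.injective i).comp (hg i)⟩

namespace IsPerpSimple

theorem injective (hW : IsPerpSimple B S W) (hX : LeftPerp B S X) {f : RepHom W X}
    (hf : ¬ f.IsZero) (i : V) : Function.Injective (f.app i) := by
  let s := f.kerRangeShortExact
  by_cases hker : s.ι.IsZero
  · rw [injective_iff_map_eq_zero]
    exact fun x hx => hker i ⟨x, Subtype.ext hx⟩
  · refine absurd (fun k y => ?_) hf
    obtain ⟨z, rfl⟩ := hW.surjective _ (hW.leftPerp.ker hX f) s.ι hker k y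
    exact congrArg Subtype.val (s.π_ι k z)

/-- Schur's lemma, for two embeddings of a simple object `W` with comparable images. -/
theorem exists_eq_smul [IsAlgClosed K] (hW : IsPerpSimple B S W) (hX : LeftPerp B S X)
    {g : RepHom W X} (hg : ¬ g.IsZero) (f : RepHom W X)
    (hfg : ∀ i x, f.app i x ∈ LinearMap.range (g.app i)) :
    ∃ c : K, ∀ i x, f.app i x = c • g.app i x := by
  let s := ShortExact.ofInjective g (hW.injective hX hg)
  obtain ⟨φ, hφ⟩ := s.exists_hom_lift_sub f fun i x => (s.exact i _).2 (hfg i x)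
  obtain ⟨i, x, hx⟩ := hW.isNonzero
  have : Nontrivial (W.sp i) := ⟨x, 0, hx⟩
  obtain ⟨c, hc⟩ := Module.End.exists_eigenvalue (φ.app i : Module.End K (W.sp i))
  obtain ⟨v, hv⟩ := hc.exists_hasEigenvector
  let d : RepHom W X := f.add (.smul (-c) g)
  have d_app (k y) : d.app k y = f.app k y - c • g.app k y := by
    rw [sub_eq_add_neg, ← neg_smul]
    rfl
  have d_zero : d.IsZero := by
    by_contra hd
    refine hv.2 (hW.injective hX hd i ?_)
    rw [map_zero, d_app, ← hφ, hv.apply_eq_smul, map_smul]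
    exact sub_self _
  exact ⟨c, fun k y => sub_eq_zero.1 ((d_app k y).symm.trans (d_zero k y))⟩

theorem isSchur [IsAlgClosed K] (hW : IsPerpSimple B S W) : W.IsSchur :=
  homDim_eq_one (not_isZero_idHom hW.isNonzero) fun f =>
    hW.exists_eq_smul hW.leftPerp (not_isZero_idHom hW.isNonzero) f fun _ _ => ⟨_, rfl⟩

theorem homVanishes (hW : IsPerpSimple B S W) (hW' : IsPerpSimple B S W')
    (hdim : W.dimVec ≠ W'.dimVec) : HomVanishes W W' := by
  intro f
  by_contra hf
  exact hdim <| funext fun i => le_antisymm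
    (LinearMap.finrank_le_finrank_of_injective (hW.injective hW'.leftPerp hf i))
    (LinearMap.finrank_le_finrank_of_surjective (hW'.surjective W hW.leftPerp f hf i))

end IsPerpSimple

theorem PerpInjective.quotient (hM : PerpInjective B S M) (s : ShortExact N M Q) :
    PerpInjective B S Q :=
  fun W hW => s.extVanishes_right_quotient (hM W hW)

end PerpSimple

section InjectiveHull

variable {K : Type} [Field K] {V A : Type} [Fintype V] [Fintype A] {t h : A → V}
  {B N M W W' J J' : QuivRep K V A t h} {S : Finset V}

/-- `J` is an injective object of the left perpendicular category of `B` receiving a nonzero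
morphism from `W`, and its quotients pair nonnegatively with nonnegative semistable weights. -/
structure IsInjectiveTarget (B : QuivRep K V A t h) (S : Finset V) (W J : QuivRep K V A t h) :
    Prop where
  leftPerp : LeftPerp B S J
  perpInjective : PerpInjective B S J
  quotientsPairNonneg : QuotientsPairNonneg B S J
  not_homVanishes : ¬ HomVanishes W J

/-- The injective hull `J` of `W` in the left perpendicular category of `B`, described as the
smallest injective object receiving a nonzero morphism from `W`. -/
structure IsInjectiveHull (B : QuivRep K V A t h) (S : Finset V) (W J : QuivRep K V A t h) : Prop
    extends IsInjectiveTarget B S W J where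
  totalDim_le : ∀ J', IsInjectiveTarget B S W J' → J.totalDim ≤ J'.totalDim

theorem exists_isInjectiveHull (hQ : Acyclic t h) (hB : B.IsExceptional)
    (hBS : VanishesOn S B) (hW : LeftPerp B S W) (hW₀ : W.IsNonzero) :
    ∃ J, IsInjectiveHull B S W J := by
  obtain ⟨j, hj⟩ := hW₀
  obtain ⟨M, hM, hMB⟩ := exists_isInjectiveApprox hQ hB hBS j
  have target : IsInjectiveTarget B S W M := ⟨⟨hM.vanishesOn, hM.hom, hMB⟩, hM.perpInjective,
    hM.quotientsPairNonneg, hM.not_homVanishes W hW hj⟩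
  obtain ⟨J, hJ, hmin⟩ := (measure totalDim).wf.has_min {J | IsInjectiveTarget B S W J} ⟨M, target⟩
  exact ⟨J, hJ, fun J' hJ' => not_lt.1 (hmin J' hJ')⟩

namespace IsInjectiveHull

/-- Otherwise the cokernel of `g` would be a smaller injective object receiving a nonzero morphism
from `W`. -/
theorem mem_range (hJ : IsInjectiveHull B S W J) (hN : LeftPerp B S N) {g : RepHom N J}
    (hg : ¬ g.IsZero) (ι : RepHom W J) (i : V) (x : W.sp i) :
    ι.app i x ∈ LinearMap.range (g.app i) := by
  let s := g.range.shortExact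
  have zero : (ι.comp s.π).IsZero := by
    by_contra hne
    have target : IsInjectiveTarget B S W g.range.quotient :=
      ⟨.quotient s (hN.range hJ.leftPerp g) hJ.leftPerp, hJ.perpInjective.quotient s,
        hJ.quotientsPairNonneg.of_surjective s.π s.surjective, fun H => hne (H _)⟩
    have := hJ.totalDim_le _ target
    have := s.totalDim_eq
    have := totalDim_pos_iff.2 (isNonzero_range hg)
    lia
  exact (Submodule.Quotient.mk_eq_zero _).1 (zero i x)

theorem homVanishes (hJ : IsInjectiveHull B S W J) (hW : IsPerpSimple B S W)
    (hW' : IsPerpSimple B S W') (hdim : W.dimVec ≠ W'.dimVec) : HomVanishes W' J := by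
  obtain ⟨ι, hι⟩ := not_forall.1 hJ.not_homVanishes
  intro f
  by_contra hf
  let s := ShortExact.ofInjective f (hW'.injective hJ.leftPerp hf)
  obtain ⟨u, hu⟩ := s.exists_hom_lift_sub ι fun i x =>
    (s.exact i _).2 (hJ.mem_range hW'.leftPerp hf ι i x)
  refine hι fun i x => ?_
  rw [← hu, hW.homVanishes hW' hdim u, map_zero]

theorem homDim_eq_one [IsAlgClosed K] (hJ : IsInjectiveHull B S W J) (hW : IsPerpSimple B S W) :
    homDim W J = 1 := by
  obtain ⟨ι, hι⟩ := not_forall.1 hJ.not_homVanishes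
  exact QuivRep.homDim_eq_one hι fun f =>
    hW.exists_eq_smul hJ.leftPerp hι f (hJ.mem_range hW.leftPerp hι f)

theorem exists_injective (hJ : IsInjectiveHull B S W J) (hW : IsPerpSimple B S W)
    (hM : LeftPerp B S M) (hMi : PerpInjective B S M) (hWM : ¬ HomVanishes W M) :
    ∃ F : RepHom J M, ∀ i, Function.Injective (F.app i) := by
  obtain ⟨f, hf⟩ := not_forall.1 hWM
  obtain ⟨ι, hι⟩ := not_forall.1 hJ.not_homVanishes
  let s := ShortExact.ofInjective ι (hW.injective hJ.leftPerp hι)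
  obtain ⟨F, hF⟩ := s.exists_hom_extend (hMi _ (.quotient s hW.leftPerp hJ.leftPerp)) f
  let u := F.kerRangeShortExact
  have ker_zero : u.ι.IsZero := by
    by_contra hker
    refine hf fun k y => ?_
    obtain ⟨z, hz : u.ι.app k z = ι.app k y⟩ :=
      hJ.mem_range (hJ.leftPerp.ker hM F) hker ι k y
    rw [← hF, show s.ι.app k y = _ from hz.symm]
    exact congrArg Subtype.val (u.π_ι k z)
  refine ⟨F, fun i => (injective_iff_map_eq_zero _).2 fun x hx => ?_⟩
  exact ker_zero i ⟨x, Subtype.ext hx⟩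

/-- A nonsplit extension of `W` by `W'` gives a nonzero morphism from `W` to the cokernel of
`W' → J'`, hence an embedding of `J` into this cokernel. -/
theorem totalDim_lt (hJ : IsInjectiveHull B S W J) (hW : IsPerpSimple B S W)
    (hJ' : IsInjectiveHull B S W' J') (hW' : IsPerpSimple B S W') (hext : ¬ ExtVanishes W W') :
    J.totalDim < J'.totalDim := by
  obtain ⟨ι, hι⟩ := not_forall.1 hJ'.not_homVanishes
  let s := ShortExact.ofInjective ι (hW'.injective hJ'.leftPerp hι)
  have hom_ne_zero : ¬ HomVanishes W ι.range.quotient := fun H =>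
    hext (s.extVanishes_right_sub H (hJ'.perpInjective W hW.leftPerp))
  obtain ⟨F, hF⟩ := hJ.exists_injective hW (.quotient s hW'.leftPerp hJ'.leftPerp)
    (hJ'.perpInjective.quotient s) hom_ne_zero
  have := totalDim_le_of_injective F hF
  have := s.totalDim_eq
  have := totalDim_pos_iff.2 hW'.isNonzero
  lia

theorem pairing_of_dimVec_ne (hJ : IsInjectiveHull B S W J) (hW : IsPerpSimple B S W)
    (hW' : IsPerpSimple B S W') (hdim : W.dimVec ≠ W'.dimVec) :
    J.pairing (natQ W'.dimVec) = 0 := by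
  rw [pairing_natQ_dimVec, homVanishes_iff_homDim.1 (hJ.homVanishes hW hW' hdim),
    extVanishes_iff_extDim.1 (hJ.perpInjective W' hW'.leftPerp), Nat.cast_zero, sub_zero]

theorem pairing_self [IsAlgClosed K] (hJ : IsInjectiveHull B S W J) (hW : IsPerpSimple B S W) :
    J.pairing (natQ W.dimVec) = 1 := by
  rw [pairing_natQ_dimVec, hJ.homDim_eq_one hW,
    extVanishes_iff_extDim.1 (hJ.perpInjective W hW.leftPerp), Nat.cast_one, Nat.cast_zero,
    sub_zero]

end IsInjectiveHull

end InjectiveHull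

section SimpleDims

variable {K : Type} [Field K] {V A : Type} [Fintype V] [Fintype A] {t h : A → V}
  {B M : QuivRep K V A t h} {S : Finset V}

/-- The dimension vectors of the simple objects of the left perpendicular category of `B`. -/
def simpleDims (B : QuivRep K V A t h) (S : Finset V) : Set (V → ℕ) :=
  {b | ∃ W, IsPerpSimple B S W ∧ W.dimVec = b}

/-- A choice of a simple object for every element of `simpleDims B S`, and of its injective
hull. -/
structure SimpleSystem (B : QuivRep K V A t h) (S : Finset V) where
  W : simpleDims B S → QuivRep K V A t h
  J : simpleDims B S → QuivRep K V A t h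
  isPerpSimple : ∀ b, IsPerpSimple B S (W b)
  dimVec_eq : ∀ b, (W b).dimVec = b
  isInjectiveHull : ∀ b, IsInjectiveHull B S (W b) (J b)

theorem nonempty_simpleSystem (hQ : Acyclic t h) (hB : B.IsExceptional)
    (hBS : VanishesOn S B) : Nonempty (SimpleSystem B S) := by
  choose W hW hdim using fun b : simpleDims B S => b.2
  choose J hJ using fun b =>
    exists_isInjectiveHull hQ hB hBS (hW b).leftPerp (hW b).isNonzero
  exact ⟨⟨W, J, hW, hdim, hJ⟩⟩

theorem LeftPerp.natQ_mem_perpSpace {W : QuivRep K V A t h} (hW : LeftPerp B S W) :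
    natQ W.dimVec ∈ perpSpace B S :=
  ⟨fun i hi => Nat.cast_eq_zero.2 (vanishesOn_iff_dimVec.1 hW.vanishesOn i hi),
    hW.pairing_eq_zero⟩

theorem natQ_mem_perpSpace_of_mem_simpleDims {b : V → ℕ} (hb : b ∈ simpleDims B S) :
    natQ b ∈ perpSpace B S := by
  obtain ⟨W, hW, rfl⟩ := hb
  exact hW.leftPerp.natQ_mem_perpSpace

theorem IsExceptional.pairing_self (hB : B.IsExceptional) : B.pairing (natQ B.dimVec) = 1 := by
  rw [pairing_natQ_dimVec, hB.1, hB.2, Nat.cast_one, Nat.cast_zero, sub_zero]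

theorem finrank_perpSpace (hB : B.IsExceptional) (hBS : VanishesOn S B) :
    Module.finrank ℚ (perpSpace B S) + S.card + 1 = Fintype.card V := by
  let constraints := (LinearMap.funLeft ℚ ℚ ((↑) : S → V)).prod B.pairing
  have perpSpace_eq : perpSpace B S = LinearMap.ker constraints := by
    ext x
    simp only [LinearMap.mem_ker, constraints, LinearMap.prod_apply, Function.prod_apply,
      Prod.mk_eq_zero]
    exact and_congr_left' ⟨fun H => funext fun i => H i i.2, fun H i hi => congrFun H ⟨i, hi⟩⟩
  have surjective : Function.Surjective constraints := by
    rintro ⟨d, e⟩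
    obtain ⟨x, rfl⟩ := LinearMap.funLeft_surjective_of_injective ℚ ℚ _ Subtype.val_injective d
    refine ⟨x + (e - B.pairing x) • natQ B.dimVec, Prod.ext (funext fun i => ?_) ?_⟩
    · have : natQ B.dimVec i = 0 := Nat.cast_eq_zero.2 (vanishesOn_iff_dimVec.1 hBS i i.2)
      change x i + (e - B.pairing x) * natQ B.dimVec i = x i
      rw [this, mul_zero, add_zero]
    · change B.pairing (x + (e - B.pairing x) • natQ B.dimVec) = e
      rw [map_add, map_smul, hB.pairing_self, smul_eq_mul, mul_one, add_sub_cancel]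
  have rankNullity := LinearMap.finrank_range_add_finrank_ker constraints
  rw [LinearMap.range_eq_top.2 surjective, ← perpSpace_eq] at rankNullity
  simp only [finrank_top, Module.finrank_prod, Module.finrank_fintype_fun_eq_card,
    Module.finrank_self, Fintype.card_coe] at rankNullity
  lia

namespace SimpleSystem

theorem exists_not_homVanishes (s : SimpleSystem B S) (hM : LeftPerp B S M)
    (hMi : PerpInjective B S M) (hM₀ : M.IsNonzero) : ∃ b, ¬ HomVanishes (s.W b) M := by
  obtain ⟨W, hW, f, hf⟩ := exists_isPerpSimple_injective hM hM₀
  let b : simpleDims B S := ⟨W.dimVec, W, hW, rfl⟩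
  refine ⟨b, fun hzero => ?_⟩
  have homDim_eq (X) (hX : LeftPerp B S X) : (homDim X M : ℚ) = M.pairing (natQ X.dimVec) := by
    rw [pairing_natQ_dimVec, extVanishes_iff_extDim.1 (hMi X hX), Nat.cast_zero, sub_zero]
  have homDim_zero : (homDim W M : ℚ) = 0 := by
    rw [homDim_eq W hW.leftPerp, show W.dimVec = (s.W b).dimVec from (s.dimVec_eq b).symm,
      ← homDim_eq _ (s.isPerpSimple _).leftPerp, homVanishes_iff_homDim.1 hzero, Nat.cast_zero]
  obtain ⟨i, x, hx⟩ := hW.isNonzero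
  refine hx (hf i ?_)
  rw [map_zero, homVanishes_iff_homDim.2 (Nat.cast_eq_zero.1 homDim_zero) f]

theorem pairing_eq_zero (s : SimpleSystem B S) {x : V → ℚ} (hx : ∀ b, (s.J b).pairing x = 0)
    (hM : LeftPerp B S M) (hMi : PerpInjective B S M) : M.pairing x = 0 := by
  induction hn : M.totalDim using Nat.strong_induction_on generalizing M with
  | _ n ih =>
    by_cases hM₀ : M.IsNonzero
    · obtain ⟨b, hb⟩ := s.exists_not_homVanishes hM hMi hM₀
      have hJ := s.isInjectiveHull b
      obtain ⟨F, hF⟩ := hJ.exists_injective (s.isPerpSimple b) hM hMi hb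
      let u := ShortExact.ofInjective F hF
      have : 0 < (s.J b).totalDim := by
        obtain ⟨ι, hι⟩ := not_forall.1 hJ.not_homVanishes
        simp only [RepHom.IsZero, not_forall] at hι
        obtain ⟨i, y, hy⟩ := hι
        exact totalDim_pos_iff.2 ⟨i, _, hy⟩
      have := u.totalDim_eq
      rw [u.pairing_eq, hx b, zero_add]
      exact ih _ (by lia) (.quotient u hJ.leftPerp hM) (hMi.quotient u) rfl
    · refine pairing_eq_zero_of_dimVec (funext fun i => dimVec_eq_zero_iff.2 fun x => ?_) x
      exact not_not.1 fun hx => hM₀ ⟨i, x, hx⟩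

variable [IsAlgClosed K]

open Classical in
theorem pairing_J (s : SimpleSystem B S) (b b' : simpleDims B S) :
    (s.J b').pairing (natQ b) = if b = b' then 1 else 0 := by
  rw [← s.dimVec_eq b]
  split_ifs with hbb'
  · rw [hbb']
    exact (s.isInjectiveHull b').pairing_self (s.isPerpSimple b')
  · refine (s.isInjectiveHull b').pairing_of_dimVec_ne (s.isPerpSimple b') (s.isPerpSimple b) ?_
    rw [s.dimVec_eq, s.dimVec_eq]
    exact fun heq => hbb' (Subtype.ext heq.symm)

theorem linearIndependent_natQ (s : SimpleSystem B S) :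
    LinearIndependent ℚ fun b : simpleDims B S => natQ (b : V → ℕ) := by
  classical
  rw [linearIndependent_iff']
  intro F c hc b hb
  have := congrArg (s.J b).pairing hc
  simpa only [map_sum, map_smul, s.pairing_J, smul_eq_mul, mul_ite, mul_one, mul_zero,
    Finset.sum_ite_eq', if_pos hb, map_zero] using this

theorem linearIndependent_perpSpace (s : SimpleSystem B S) : LinearIndependent ℚ
    fun b : simpleDims B S => (⟨natQ b, natQ_mem_perpSpace_of_mem_simpleDims b.2⟩ :
      perpSpace B S) :=
  .of_comp (perpSpace B S).subtype s.linearIndependent_natQ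

theorem finite_simpleDims (s : SimpleSystem B S) : Finite (simpleDims B S) :=
  s.linearIndependent_perpSpace.finite

theorem card_simpleDims_add_card_lt (s : SimpleSystem B S) (hB : B.IsExceptional)
    (hBS : VanishesOn S B) : Nat.card (simpleDims B S) + S.card < Fintype.card V := by
  have := s.finite_simpleDims
  have := Fintype.ofFinite (simpleDims B S)
  have card_le := s.linearIndependent_perpSpace.fintype_card_le_finrank
  have := finrank_perpSpace hB hBS
  rw [Nat.card_eq_fintype_card]
  lia

/-- The coefficient of the dimension vector `b` is read off by pairing with the injective hull
`J b`; a weight in the perpendicular space which pairs to zero with all of these also pairs to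
zero with the approximation of each `I_j`, which reads off its `j`-th coordinate. -/
theorem exists_nonneg_combination [Fintype (simpleDims B S)]
    (s : SimpleSystem B S) (hQ : Acyclic t h) (hB : B.IsExceptional) (hBS : VanishesOn S B)
    {α : V → ℚ} (hα : IsNonnegWeight B S α) :
    ∃ c : simpleDims B S → ℚ, (∀ b, 0 ≤ c b) ∧ α = ∑ b, c b • natQ (b : V → ℕ) := by
  classical
  let c b := (s.J b).pairing α
  refine ⟨c, fun b => (s.isInjectiveHull b).quotientsPairNonneg.pairing_nonneg hα, ?_⟩
  let δ := α - ∑ b, c b • natQ (b : V → ℕ)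
  have δ_mem : δ ∈ perpSpace B S := Submodule.sub_mem _ hα.mem_perpSpace <|
    Submodule.sum_mem _ fun b _ =>
      Submodule.smul_mem _ _ (natQ_mem_perpSpace_of_mem_simpleDims b.2)
  have δ_pairing (b) : (s.J b).pairing δ = 0 := by
    simp only [δ, map_sub, map_sum, map_smul, s.pairing_J, smul_eq_mul, mul_ite, mul_one,
      mul_zero, Finset.sum_ite_eq', Finset.mem_univ, if_true]
    exact sub_self _
  refine sub_eq_zero.1 (funext fun j => ?_)
  obtain ⟨M, hM, hMB⟩ := exists_isInjectiveApprox hQ hB hBS j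
  change δ j = 0
  rw [← hM.pairing_eq δ δ_mem]
  exact s.pairing_eq_zero δ_pairing ⟨hM.vanishesOn, hM.hom, hMB⟩ hM.perpInjective

end SimpleSystem

end SimpleDims

end QuivRep

section Truncation

variable {V A : Type} [Fintype V] [Fintype A] {t h : A → V}

/-- `α'` is a nonnegative weight obtained from `α` by adding a nonnegative combination of the
projective roots, with coefficients `n` supported off the support of `α'`. The combination is
encoded by its Euler pairing with an arbitrary vector. -/
structure IsNonnegTruncation (t h : A → V) (α α' n : V → ℚ) : Prop where
  nonneg : ∀ j, 0 ≤ α' j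
  coeff_nonneg : ∀ j, 0 ≤ n j
  eq_zero_of_coeff_ne_zero : ∀ j, n j ≠ 0 → α' j = 0
  eulerForm_eq : ∀ y, eulerForm t h α' y = eulerForm t h α y + ∑ j, n j * y j

theorem Acyclic.exists_isNonnegTruncation (hQ : Acyclic t h) (α : V → ℚ) :
    ∃ α' n, IsNonnegTruncation t h α α' n := by
  classical
  let defect (j : V) : ℚ := α j - ∑ a : {a // h a = j}, α (t a)
  let α' : V → ℚ := hQ.wellFounded_tail_head.fix fun j rec =>
    max 0 (defect j + ∑ a : {a // h a = j}, rec (t a) ⟨a, rfl, a.2⟩)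
  let slack (j : V) : ℚ := defect j + ∑ a : {a // h a = j}, α' (t a)
  have α'_eq (j) : α' j = max 0 (slack j) := WellFounded.fix_eq ..
  refine ⟨α', fun j => max 0 (-slack j), fun j => (α'_eq j).symm ▸ le_max_left .., fun j =>
    le_max_left .., fun j hj => ?_, fun y => ?_⟩
  · have : 0 ≤ -slack j := le_of_not_ge fun hneg => hj (max_eq_left hneg)
    rw [α'_eq, max_eq_left (neg_nonneg.1 this)]
  · rw [eulerForm_eq_sum_in, eulerForm_eq_sum_in, ← Finset.sum_add_distrib]
    refine Finset.sum_congr rfl fun j _ => ?_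
    rw [← add_mul]
    congr 1
    change _ = defect j + _
    have : max 0 (slack j) - max 0 (-slack j) = slack j := by
      rw [max_comm, max_comm 0]
      exact posPart_sub_negPart _
    rw [α'_eq]
    simp only [slack] at this ⊢
    linarith

theorem IsNonnegTruncation.eq_add_sum (hQ : Acyclic t h) {α α' n : V → ℚ}
    (hα' : IsNonnegTruncation t h α α' n) :
    α = α' + ∑ j, n j • -natQ (gammaRoot t h j) := by
  refine sub_eq_zero.1 (hQ.eq_zero_of_eulerForm_eq_zero fun y => ?_)
  change eulerBilin t h _ y = 0
  simp only [map_sub, map_add, map_sum, map_smul, map_neg, LinearMap.sub_apply,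
    LinearMap.add_apply, LinearMap.sum_apply, LinearMap.smul_apply, LinearMap.neg_apply]
  change eulerForm t h α y - (eulerForm t h α' y +
    ∑ j, n j * -eulerForm t h (natQ (gammaRoot t h j)) y) = 0
  simp only [hα'.eulerForm_eq, hQ.eulerForm_gammaRoot, mul_neg, Finset.sum_neg_distrib]
  ring

end Truncation

namespace QuivRep

section Reduction

variable {K : Type} [Field K] {V A : Type} {t h : A → V} {B : QuivRep K V A t h}

theorem exists_sub_injective_outPi (hQ : Acyclic t h) [Finite V] (B : QuivRep K V A t h)
    (T : Set V) :
    ∃ U : Sub B, (∀ i ∉ T, U.sub i = ⊥) ∧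
      ∀ i ∈ T, Function.Injective (U.quotient.outPi i) := by
  classical
  let F : ∀ i, Submodule K (B.sp i) := hQ.wellFounded_head_tail.fix
    (C := fun i => Submodule K (B.sp i)) fun i rec =>
      if i ∈ T then ⨅ a : {a // t a = i}, (rec (h a) ⟨a, a.2, rfl⟩).comap (B.outMap i a) else ⊥
  have F_eq (i) : F i =
      if i ∈ T then ⨅ a : {a // t a = i}, (F (h a)).comap (B.outMap i a) else ⊥ :=
    WellFounded.fix_eq ..
  have map_mem (a : A) (x) (hx : x ∈ F (t a)) : B.map a x ∈ F (h a) := by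
    rw [F_eq] at hx
    split_ifs at hx
    · exact (Submodule.mem_iInf _).1 hx ⟨a, rfl⟩
    · rw [(Submodule.mem_bot K).1 hx, map_zero]
      exact Submodule.zero_mem _
  let U : Sub B := ⟨F, map_mem⟩
  refine ⟨U, fun i hi => (F_eq i).trans (if_neg hi), fun i hi => ?_⟩
  rw [injective_iff_map_eq_zero]
  intro y hy
  obtain ⟨x, rfl⟩ := U.shortExact.surjective i y
  suffices x ∈ F i from (U.shortExact.exact i x).2 ⟨⟨x, this⟩, rfl⟩
  rw [F_eq, if_pos hi, Submodule.mem_iInf]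
  intro a
  have outMap_π : U.quotient.outMap i a (U.shortExact.π.app i x) = 0 := congrFun hy a
  rw [← RepHom.app_outMap] at outMap_π
  obtain ⟨z, hz⟩ := (U.shortExact.exact _ _).1 outMap_π
  rw [Submodule.mem_comap, ← hz]
  exact z.2

variable [Fintype V] [Fintype A]

/-- Test `α` on the subrepresentation which is zero off the support of `α'` and whose quotient
embeds along the arrows leaving that support. -/
theorem dimVec_eq_zero_of_coeff_ne_zero (hQ : Acyclic t h) {α α' n : V → ℚ}
    (hα : B.pairing α = 0) (hαU : ∀ U : Sub B, U.rep.pairing α ≤ 0)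
    (hα' : IsNonnegTruncation t h α α' n) {j : V} (hj : n j ≠ 0) : B.dimVec j = 0 := by
  obtain ⟨U, hU₀, hU⟩ := exists_sub_injective_outPi hQ B {i | α' i ≠ 0}
  have term_nonneg (i : V) : 0 ≤ n i * natQ U.quotient.dimVec i :=
    mul_nonneg (hα'.coeff_nonneg i) (Nat.cast_nonneg _)
  have sum_eq_zero : ∑ i, n i * natQ U.quotient.dimVec i = 0 := by
    refine le_antisymm ?_ (Finset.sum_nonneg fun i _ => term_nonneg i)
    have quotient_nonpos := pairing_nonpos_of_injective_outPi hα'.nonneg hU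
    rw [pairing_apply, hα'.eulerForm_eq, ← pairing_apply] at quotient_nonpos
    have := U.shortExact.pairing_eq α
    linarith [hαU U]
  have quotient_zero : U.quotient.dimVec j = 0 := by
    have := (Finset.sum_eq_zero_iff_of_nonneg fun i _ => term_nonneg i).1 sum_eq_zero j
      (Finset.mem_univ j)
    exact Nat.cast_eq_zero.1 ((mul_eq_zero.1 this).resolve_left hj)
  have sub_zero : U.rep.dimVec j = 0 := by
    change Module.finrank K (U.sub j) = 0
    rw [hU₀ j (not_not.2 (hα'.eq_zero_of_coeff_ne_zero j hj)), finrank_bot]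
  rw [U.shortExact.dimVec_eq, Pi.add_apply, sub_zero, quotient_zero]

theorem exists_isNonnegWeight_sub_gammaRoot (hQ : Acyclic t h) {α : V → ℚ}
    (hα : B.pairing α = 0) (hαU : ∀ U : Sub B, U.rep.pairing α ≤ 0) :
    ∃ (S : Finset V) (α' n : V → ℚ), VanishesOn S B ∧ IsNonnegWeight B S α' ∧
      (∀ j, 0 ≤ n j) ∧ α = α' + ∑ j ∈ S, n j • -natQ (gammaRoot t h j) := by
  obtain ⟨α', n, hα'⟩ := hQ.exists_isNonnegTruncation α
  let S : Finset V := {j | n j ≠ 0}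
  have coeff_ne_zero {j} (hj : j ∈ S) : n j ≠ 0 := (Finset.mem_filter.1 hj).2
  have hBS : VanishesOn S B := vanishesOn_iff_dimVec.2 fun j hj =>
    dimVec_eq_zero_of_coeff_ne_zero hQ hα hαU hα' (coeff_ne_zero hj)
  have pairing_eq {X : QuivRep K V A t h} (hX : VanishesOn S X) :
      X.pairing α' = X.pairing α := by
    rw [pairing_apply, hα'.eulerForm_eq, ← pairing_apply, add_eq_left]
    refine Finset.sum_eq_zero fun j _ => ?_
    by_cases hj : n j = 0
    · rw [hj, zero_mul]
    · have : X.dimVec j = 0 := vanishesOn_iff_dimVec.1 hX j (by simpa [S] using hj)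
      rw [natQ, this, Nat.cast_zero, mul_zero]
  have weight : IsNonnegWeight B S α' :=
    { nonneg := hα'.nonneg
      mem_perpSpace := ⟨fun j hj => hα'.eq_zero_of_coeff_ne_zero j (coeff_ne_zero hj),
        (pairing_eq hBS).trans hα⟩
      pairing_sub_nonpos := fun U =>
        (pairing_eq (U.shortExact.vanishesOn_sub hBS)).trans_le (hαU U) }
  refine ⟨S, α', n, hBS, weight, hα'.coeff_nonneg, ?_⟩
  rw [Finset.sum_filter_of_ne fun j _ hj => left_ne_zero_of_smul hj]
  exact hα'.eq_add_sum hQ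

end Reduction

end QuivRep

section Cones

variable {V : Type}

theorem coneOf_eq_hull (E : Finset (V → ℤ)) :
    coneOf E = (PointedCone.hull ℚ (intQ '' (E : Set (V → ℤ))) : Set (V → ℚ)) := by
  ext x
  rw [SetLike.mem_coe, PointedCone.hull, Submodule.mem_span_image_finset_iff_exists_fun']
  constructor
  · rintro ⟨c, hc, rfl⟩
    exact ⟨fun v => ⟨c v, hc v⟩, rfl⟩
  · rintro ⟨c, rfl⟩
    exact ⟨fun v => c v, fun v => (c v).2, rfl⟩

theorem image_eq_range_of_surjective {ι α γ : Type*} {s : Set α} {f : ι → s}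
    (hf : Function.Surjective f) (g : α → γ) : g '' s = Set.range fun i => g (f i) := by
  rw [Set.image_eq_range, ← hf.range_comp]
  rfl

theorem intQ_natZ (b : V → ℕ) : intQ (natZ b) = natQ b :=
  funext fun _ => Int.cast_natCast _

theorem intQ_neg_gammaRoot {A : Type} (t h : A → V) (i : V) :
    intQ (fun v => -(gammaRoot t h i v : ℤ)) = -natQ (gammaRoot t h i) :=
  funext fun v => by simp [intQ, natQ]

variable {K : Type} [Field K] {A : Type} [Fintype V] [Fintype A] {t h : A → V}

/-- The cone `D(β)` as a pointed cone. -/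
def domCone (K : Type) [Field K] (t h : A → V) (β : V → ℕ) : PointedCone ℚ (V → ℚ) where
  carrier := Dom K t h β
  zero_mem' := by simp [Dom, eulerForm]
  add_mem' {x y} hx hy := by
    have add (z) : eulerForm t h (x + y) z = eulerForm t h x z + eulerForm t h y z :=
      LinearMap.map_add₂ (eulerBilin t h) x y z
    refine ⟨by rw [add, hx.1, hy.1, add_zero], fun β' hβ' => ?_⟩
    rw [add]
    exact add_nonpos (hx.2 β' hβ') (hy.2 β' hβ')
  smul_mem' c x hx := by
    have smul (z) : eulerForm t h (c • x) z = c * eulerForm t h x z :=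
      LinearMap.map_smul₂ (eulerBilin t h) (c : ℚ) x z
    refine ⟨by rw [smul, hx.1, mul_zero], fun β' hβ' => ?_⟩
    rw [smul]
    exact mul_nonpos_of_nonneg_of_nonpos c.2 (hx.2 β' hβ')

theorem coneOf_subset_Dom {β : V → ℕ} {E : Finset (V → ℤ)}
    (hE : ∀ x ∈ E, intQ x ∈ Dom K t h β) : coneOf E ⊆ Dom K t h β := by
  rw [coneOf_eq_hull]
  exact (Submodule.span_le (p := domCone K t h β)).2 (Set.image_subset_iff.2 hE)

theorem neg_natQ_gammaRoot_mem_Dom (hQ : Acyclic t h) {β : V → ℕ} {i : V}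
    (hi : β i = 0) : -natQ (gammaRoot t h i) ∈ Dom K t h β := by
  have pairing (y) : eulerForm t h (-natQ (gammaRoot t h i)) y = -y i := by
    rw [← hQ.eulerForm_gammaRoot i y]
    exact LinearMap.map_neg₂ (eulerBilin t h) _ y
  refine ⟨by simp [pairing, natQ, hi], fun β' _ => ?_⟩
  rw [pairing]
  exact neg_nonpos.2 (Nat.cast_nonneg _)

end Cones

namespace QuivRep

section ExceptionalSet

variable {K : Type} [Field K] {V A : Type} {t h : A → V} {B X Y : QuivRep K V A t h}
  {S : Finset V}

theorem HomVanishes.homMin_eq_zero [Finite V] (hXY : HomVanishes X Y) :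
    homMin K t h X.dimVec Y.dimVec = 0 :=
  Nat.le_zero.1 (Nat.sInf_le ⟨X, Y, rfl, rfl, homVanishes_iff_homDim.1 hXY⟩)

theorem ExtVanishes.extMin_eq_zero [Finite A] (hXY : ExtVanishes X Y) :
    extMin K t h X.dimVec Y.dimVec = 0 :=
  Nat.le_zero.1 (Nat.sInf_le ⟨X, Y, rfl, rfl, extVanishes_iff_extDim.1 hXY⟩)

variable [Fintype V] [Fintype A]

theorem LeftPerp.natQ_dimVec_mem_Dom (hX : LeftPerp B S X) :
    natQ X.dimVec ∈ Dom K t h B.dimVec := by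
  refine ⟨hX.pairing_eq_zero, fun β' hβ' => ?_⟩
  obtain ⟨U, rfl⟩ := hβ' B rfl
  change U.rep.pairing (natQ X.dimVec) ≤ 0
  rw [pairing_natQ_dimVec,
    homVanishes_iff_homDim.1 (U.shortExact.homVanishes_right_sub hX.hom), Nat.cast_zero, zero_sub]
  exact neg_nonpos.2 (Nat.cast_nonneg _)

theorem HomVanishes.eulerForm_nonpos (hXY : HomVanishes X Y) :
    eulerForm t h (natZ X.dimVec) (natZ Y.dimVec) ≤ 0 := by
  rw [← homDim_sub_extDim, homVanishes_iff_homDim.1 hXY, Nat.cast_zero, zero_sub]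
  exact neg_nonpos.2 (Nat.cast_nonneg _)

namespace SimpleSystem

variable (s : SimpleSystem B S)

theorem homVanishes {b b' : simpleDims B S} (hb : b ≠ b') : HomVanishes (s.W b) (s.W b') :=
  (s.isPerpSimple b).homVanishes (s.isPerpSimple b') fun heq =>
    hb (Subtype.ext (by rw [← s.dimVec_eq, ← s.dimVec_eq, heq]))

theorem extVanishes {b b' : simpleDims B S} (hJ : (s.J b').totalDim ≤ (s.J b).totalDim) :
    ExtVanishes (s.W b) (s.W b') :=
  of_not_not fun hext => hJ.not_gt <|
    (s.isInjectiveHull b).totalDim_lt (s.isPerpSimple b) (s.isInjectiveHull b')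
      (s.isPerpSimple b') hext

variable [IsAlgClosed K]

theorem isExceptional (b : simpleDims B S) : (s.W b).IsExceptional :=
  ⟨extVanishes_iff_extDim.1 (s.extVanishes le_rfl), (s.isPerpSimple b).isSchur⟩

theorem isQES {l : ℕ} {b : Fin l → simpleDims B S} (hb : Function.Injective b)
    (hJ : Antitone fun i => (s.J (b i)).totalDim) : IsQES K t h fun i => (b i : V → ℕ) := by
  refine ⟨fun i => ⟨s.W (b i), s.dimVec_eq _, s.isExceptional _⟩,
    fun i j hij => ?_⟩
  dsimp only
  rw [← s.dimVec_eq, ← s.dimVec_eq]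
  exact ⟨(s.homVanishes (hb.ne hij.ne)).homMin_eq_zero, (s.extVanishes (hJ hij.le)).extMin_eq_zero,
    (s.homVanishes (hb.ne hij.ne')).eulerForm_nonpos⟩

theorem exists_bijective_antitone : ∃ b : Fin (Nat.card (simpleDims B S)) → simpleDims B S,
    Function.Bijective b ∧ Antitone fun i => (s.J (b i)).totalDim := by
  have := s.finite_simpleDims
  let e := (Finite.equivFin (simpleDims B S)).symm
  let σ := Tuple.sort fun i => OrderDual.toDual (s.J (e i)).totalDim
  exact ⟨e ∘ σ, e.bijective.comp σ.bijective,
    Tuple.monotone_sort fun i => OrderDual.toDual (s.J (e i)).totalDim⟩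

/-- The dimension vectors of the simple objects of the left perpendicular category of `B`,
together with the negative projective roots of the vertices of `S`. -/
def exceptionalSet : Finset (V → ℤ) :=
  ((Set.Finite.image natZ s.finite_simpleDims).union
    (S.finite_toSet.image fun i v => -(gammaRoot t h i v : ℤ))).toFinset

theorem coe_exceptionalSet : (s.exceptionalSet : Set (V → ℤ)) =
    natZ '' simpleDims B S ∪ (fun i v => -(gammaRoot t h i v : ℤ)) '' (S : Set V) :=
  Set.Finite.coe_toFinset _

theorem isQExcSet_exceptionalSet : IsQExcSet K t h s.exceptionalSet := by
  obtain ⟨b, hb, hJ⟩ := s.exists_bijective_antitone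
  refine ⟨_, S.card, fun i => b i, fun k => S.equivFin.symm k,
    Subtype.val_injective.comp hb.injective,
    Subtype.val_injective.comp S.equivFin.symm.injective, s.isQES hb.injective hJ,
    fun i k => ?_, ?_⟩
  · dsimp only
    rw [← s.dimVec_eq]
    exact vanishesOn_iff_dimVec.1 (s.isPerpSimple _).leftPerp.vanishesOn _ (S.equivFin.symm k).2
  · rw [coe_exceptionalSet]
    congr 1
    · exact (image_eq_range_of_surjective hb.surjective natZ)
    · exact (image_eq_range_of_surjective S.equivFin.symm.surjective _)

theorem card_exceptionalSet_le (hB : B.IsExceptional) (hBS : VanishesOn S B) :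
    s.exceptionalSet.card ≤ Fintype.card V - 1 := by
  refine Nat.le_sub_one_of_lt (lt_of_le_of_lt ?_ (s.card_simpleDims_add_card_lt hB hBS))
  rw [← Set.ncard_coe_finset, coe_exceptionalSet]
  refine (Set.ncard_union_le _ _).trans (add_le_add ?_ ?_)
  · exact (Set.ncard_image_le s.finite_simpleDims).trans_eq (Nat.card_coe_set_eq _).symm
  · exact (Set.ncard_image_le S.finite_toSet).trans_eq (Set.ncard_coe_finset S)

theorem coneOf_exceptionalSet_subset_Dom (hQ : Acyclic t h) (hBS : VanishesOn S B) :
    coneOf s.exceptionalSet ⊆ Dom K t h B.dimVec := by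
  refine coneOf_subset_Dom fun x hx => ?_
  rw [← Finset.mem_coe, coe_exceptionalSet] at hx
  obtain ⟨_, ⟨W, hW, rfl⟩, rfl⟩ | ⟨i, hi, rfl⟩ := hx
  · rw [intQ_natZ]
    exact hW.leftPerp.natQ_dimVec_mem_Dom
  · rw [intQ_neg_gammaRoot]
    exact neg_natQ_gammaRoot_mem_Dom hQ (vanishesOn_iff_dimVec.1 hBS i hi)

theorem add_sum_mem_coneOf_exceptionalSet (hQ : Acyclic t h) (hB : B.IsExceptional)
    (hBS : VanishesOn S B) {α n : V → ℚ} (hα : IsNonnegWeight B S α) (hn : ∀ j, 0 ≤ n j) :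
    α + ∑ j ∈ S, n j • -natQ (gammaRoot t h j) ∈ coneOf s.exceptionalSet := by
  have := s.finite_simpleDims
  have := Fintype.ofFinite (simpleDims B S)
  obtain ⟨c, hc, rfl⟩ := s.exists_nonneg_combination hQ hB hBS hα
  rw [coneOf_eq_hull, coe_exceptionalSet, Set.image_union]
  refine add_mem (sum_mem fun b _ => ?_) (sum_mem fun j hj => ?_)
  · exact Submodule.smul_mem _ (⟨c b, hc b⟩ : {c : ℚ // 0 ≤ c})
      (Submodule.subset_span (.inl ⟨_, ⟨b, b.2, rfl⟩, intQ_natZ (b : V → ℕ)⟩))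
  · exact Submodule.smul_mem _ (⟨n j, hn j⟩ : {c : ℚ // 0 ≤ c})
      (Submodule.subset_span (.inr ⟨_, ⟨j, hj, rfl⟩, intQ_neg_gammaRoot t h j⟩))

end SimpleSystem

end ExceptionalSet

end QuivRep

section Main

variable {K : Type} [Field K] {V A : Type} [Fintype V] [Fintype A]

theorem stmt13_general [IsAlgClosed K] (t h : A → V) (hQ : Acyclic t h)
    (β : V → ℕ) (hβ : isRealSchurRoot K t h β) :
    ∃ (m : ℕ) (Es : Fin m → Finset (V → ℤ)),
      (∀ i, IsQExcSet K t h (Es i) ∧ (Es i).card ≤ Fintype.card V - 1) ∧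
      Dom K t h β = {x | ∃ i, x ∈ coneOf (Es i)} := by
  obtain ⟨B, rfl, hB⟩ := hβ
  have rigid : QuivRep.ExtVanishes B B := QuivRep.extVanishes_iff_extDim.2 hB.1
  let e := Finite.equivFin {S : Finset V // QuivRep.VanishesOn S B}
  let s i := (QuivRep.nonempty_simpleSystem hQ hB (e.symm i).2).some
  refine ⟨_, fun i => (s i).exceptionalSet, fun i =>
    ⟨(s i).isQExcSet_exceptionalSet, (s i).card_exceptionalSet_le hB (e.symm i).2⟩,
    Set.Subset.antisymm ?_ ?_⟩
  · rintro x ⟨hx, hxU⟩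
    obtain ⟨S, α, n, hBS, hα, hn, rfl⟩ :=
      QuivRep.exists_isNonnegWeight_sub_gammaRoot hQ hx fun U => hxU _ (rigid.embeds U)
    obtain ⟨i, hi⟩ := e.symm.surjective ⟨S, hBS⟩
    have hα : QuivRep.IsNonnegWeight B (e.symm i) α := by rwa [hi]
    exact ⟨i, by simpa only [hi] using
      (s i).add_sum_mem_coneOf_exceptionalSet hQ hB (e.symm i).2 hα hn⟩
  · rintro x ⟨i, hx⟩
    exact (s i).coneOf_exceptionalSet_subset_Dom hQ (e.symm i).2 hx

end Main

/-- For a real Schur root `β` there are finitely many quiver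
exceptional sets `𝓔_1, …, 𝓔_m`, each of cardinality at most `|Q_0| − 1`, with
`D(β) = ⋃ᵢ Cone(𝓔_i)`. -/
theorem stmt13 [IsAlgClosed K] [CharZero K] (t h : A → V) (hQ : Acyclic t h)
    (β : V → ℕ) (hβ : isRealSchurRoot K t h β) :
    ∃ (m : ℕ) (Es : Fin m → Finset (V → ℤ)),
      (∀ i, IsQExcSet K t h (Es i) ∧ (Es i).card ≤ Fintype.card V - 1) ∧
      Dom K t h β = {x | ∃ i, x ∈ coneOf (Es i)} :=
  stmt13_general t h hQ β hβ

end
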